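/- arXiv:2511.23175 — 8 statements merged into one kernel-verified Lean document; each statement's English description precedes it below -/
import Mathlib

section
/- Let μ be a finitely supported probability measure on ℝ and let γ ∈ (0,1]. Then the Value-at-Risk at level γ is the left limit of the α–γ expectation as α increases to γ: the function α ↦ (1/(γ−α)) ∫_α^γ F⁻¹(s) ds, defined for α ∈ [0,γ), tends to F⁻¹(γ) as α tends to γ from the left (within [0,γ)). -/
open MeasureTheory

/-- Generalized inverse (quantile function) of the cdf `t ↦ μ (Iic t)`. -/
noncomputable def Finv (μ : Measure ℝ) (q : ℝ) : ℝ :=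
  sInf {t : ℝ | q ≤ (μ (Set.Iic t)).toReal}

/-!
The average of `F⁻¹` over `[α, γ]` is a difference quotient at `γ` of a primitive of `F⁻¹`, so by
the one-sided fundamental theorem of calculus it suffices that `F⁻¹` is left-continuous at `γ`.
If `t < F⁻¹(γ)` then `F(t) < γ`, and every `q ∈ (F(t), γ]` satisfies `t ≤ F⁻¹(q) ≤ F⁻¹(γ)`.
-/

open Filter Set
open scoped Topology

theorem tendsto_intervalAverage_nhdsLT {E : Type*} [NormedAddCommGroup E] [NormedSpace ℝ E]
    [CompleteSpace E] {f : ℝ → E} {b : ℝ} (hmeas : StronglyMeasurableAtFilter f (𝓝[≤] b))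
    (hcont : ContinuousWithinAt f (Iic b) b) :
    Tendsto (fun a ↦ ⨍ x in a..b, f x) (𝓝[<] b) (𝓝 (f b)) := by
  have hderiv : HasDerivWithinAt (fun a ↦ ∫ x in a..b, f x) (-f b) (Iic b) b :=
    intervalIntegral.integral_hasDerivWithinAt_left IntervalIntegrable.refl hmeas hcont
  rw [hasDerivWithinAt_iff_tendsto_slope, Iic_sdiff_right] at hderiv
  refine (neg_neg (f b) ▸ hderiv.neg).congr fun a ↦ ?_
  rw [interval_average_eq, slope_def_module, intervalIntegral.integral_same, sub_zero,
    ← neg_sub a b, inv_neg, neg_smul]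

theorem exists_measure_Iic_eq_measure_univ {α : Type*} [Preorder α] [MeasurableSpace α]
    {μ : Measure α} {s : Set α} (hs : BddAbove s) (hμ : μ sᶜ = 0) : ∃ b, μ (Iic b) = μ univ :=
  hs.imp fun _ hb ↦ measure_congr (eventuallyEq_univ.2 (mem_of_superset (mem_ae_iff.2 hμ) hb))

theorem monotone_toReal_measure_Iic {α : Type*} [Preorder α] [MeasurableSpace α] (μ : Measure α)
    [IsFiniteMeasure μ] : Monotone fun t ↦ (μ (Iic t)).toReal :=
  fun _ _ htu ↦ ENNReal.toReal_mono (measure_ne_top μ _) (measure_mono (Iic_subset_Iic.2 htu))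

section AtBot

variable {α : Type*} [LinearOrder α] [NoMinOrder α] [Nonempty α] [TopologicalSpace α]
  [ClosedIicTopology α] [MeasurableSpace α] [OpensMeasurableSpace α]
  [(atBot : Filter α).IsCountablyGenerated] (μ : Measure α) [IsFiniteMeasure μ]

theorem tendsto_measure_Iic_atBot : Tendsto (fun t ↦ μ (Iic t)) atBot (𝓝 0) := by
  have hempty : ⋂ t : α, Iic t = ∅ :=
    iInter_Iic_eq_empty_iff.2 (by simpa only [range_id'] using not_bddBelow_univ)
  rw [← measure_empty (μ := μ), ← hempty]
  exact tendsto_measure_iInter_atBot (fun _ ↦ measurableSet_Iic.nullMeasurableSet) monotone_Iic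
    ⟨Classical.arbitrary α, measure_ne_top μ _⟩

theorem bddBelow_setOf_le_toReal_measure_Iic {q : ℝ} (hq : 0 < q) :
    BddBelow {t | q ≤ (μ (Iic t)).toReal} := by
  have hlim : Tendsto (fun t ↦ (μ (Iic t)).toReal) atBot (𝓝 0) :=
    (ENNReal.tendsto_toReal ENNReal.zero_ne_top).comp (tendsto_measure_Iic_atBot μ)
  obtain ⟨b, hb⟩ := (hlim.eventually_lt_const hq).exists
  exact ⟨b, fun t ht ↦ ((monotone_toReal_measure_Iic μ).reflect_lt (hb.trans_le ht)).le⟩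

end AtBot

section Quantile

variable {μ : Measure ℝ} [IsFiniteMeasure μ] {p q t : ℝ}

theorem Finv_le (hq : 0 < q) (ht : q ≤ (μ (Iic t)).toReal) : Finv μ q ≤ t :=
  csInf_le (bddBelow_setOf_le_toReal_measure_Iic μ hq) ht

theorem monotoneOn_Finv (hp : ∃ t, p ≤ (μ (Iic t)).toReal) :
    MonotoneOn (Finv μ) (Ioc 0 p) := fun _ hq _ hr hqr ↦
  csInf_le_csInf (bddBelow_setOf_le_toReal_measure_Iic μ hq.1) (hp.imp fun _ ↦ hr.2.trans)
    fun _ ↦ hqr.trans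

theorem continuousWithinAt_Finv_Iic (hp₀ : 0 < p) (hp : ∃ t, p ≤ (μ (Iic t)).toReal) :
    ContinuousWithinAt (Finv μ) (Iic p) p := by
  refine tendsto_order.2 ⟨fun a ha ↦ ?_, fun a ha ↦ ?_⟩
  · obtain ⟨t, hat, htp⟩ := exists_between ha
    have hFt : (μ (Iic t)).toReal < p := lt_of_not_ge fun h ↦ htp.not_ge (Finv_le hp₀ h)
    filter_upwards [Ioc_mem_nhdsLE hFt] with q hq
    refine hat.trans_le (le_csInf (hp.imp fun _ ↦ hq.2.trans) fun u hu ↦ ?_)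
    exact ((monotone_toReal_measure_Iic μ).reflect_lt (hq.1.trans_le hu)).le
  · filter_upwards [Ioc_mem_nhdsLE hp₀] with q hq
    exact (monotoneOn_Finv hp hq (right_mem_Ioc.2 hp₀) hq.2).trans_lt ha

theorem stronglyMeasurableAtFilter_Finv_nhdsLE (hp₀ : 0 < p)
    (hp : ∃ t, p ≤ (μ (Iic t)).toReal) : StronglyMeasurableAtFilter (Finv μ) (𝓝[≤] p) :=
  ⟨Ioc 0 p, Ioc_mem_nhdsLE hp₀,
    (aemeasurable_restrict_of_monotoneOn measurableSet_Ioc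
      (monotoneOn_Finv hp)).aestronglyMeasurable⟩

end Quantile

theorem var_is_left_limit_of_alpha_gamma_expectation_general (μ : Measure ℝ) [IsFiniteMeasure μ]
    (γ : ℝ) (hγ₀ : 0 < γ) (hγ : ∃ t, γ ≤ (μ (Iic t)).toReal) :
    Tendsto (fun α : ℝ ↦ (1 / (γ - α)) * ∫ s in α..γ, Finv μ s) (𝓝[<] γ) (𝓝 (Finv μ γ)) := by
  simpa only [interval_average_eq, smul_eq_mul, one_div] using
    tendsto_intervalAverage_nhdsLT (stronglyMeasurableAtFilter_Finv_nhdsLE hγ₀ hγ)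
      (continuousWithinAt_Finv_Iic hγ₀ hγ)

/-- For a finitely supported probability measure `μ` on `ℝ` and `γ ∈ (0,1]`,
the α–γ expectation `α ↦ (1/(γ−α)) ∫_α^γ F⁻¹(s) ds` tends to `F⁻¹(γ)` as
`α → γ` from the left within `[0,γ)`. -/
theorem var_is_left_limit_of_alpha_gamma_expectation
    (μ : Measure ℝ) [IsProbabilityMeasure μ]
    (hfin : ∃ s : Finset ℝ, μ ((↑s : Set ℝ)ᶜ) = 0)
    (γ : ℝ) (hγ0 : 0 < γ) (hγ1 : γ ≤ 1) :
    Filter.Tendsto (fun α : ℝ => (1 / (γ - α)) * ∫ s in α..γ, Finv μ s)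
      (nhdsWithin γ (Set.Ico 0 γ)) (nhds (Finv μ γ)) := by
  obtain ⟨s, hs⟩ := hfin
  obtain ⟨b, hb⟩ := exists_measure_Iic_eq_measure_univ s.bddAbove hs
  exact (var_is_left_limit_of_alpha_gamma_expectation_general μ γ hγ0
    ⟨b, by simpa [hb] using hγ1⟩).mono_left (nhdsWithin_mono γ Ico_subset_Iio_self)
end

section
/- Let 0 ≤ α < γ ≤ 1 and suppose that no subset S ⊆ {1,…,n} satisfies α ≤ Σ_{i∈S} p_i < γ. Then for every T ∈ ℝ^n, the α–γ expectation equals the Value-at-Risk at level γ: E_{α,γ}(μ_T) = F⁻¹(γ). -/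
/-!
If a cdf `F` takes no value in `[α, γ)`, then for every level `s ∈ [α, γ]` the inequalities
`s ≤ F t` and `γ ≤ F t` are equivalent, so the generalized inverse is constant on `[α, γ]` and
equals its own average there. The values of the cdf of `μ_T` are subset sums of `p`.
-/

open MeasureTheory

/-- The discrete measure `μ_T = Σ_i p_i δ_{T_i}`. -/
noncomputable def muT {n : ℕ} (p T : Fin n → ℝ) : Measure ℝ :=
  ∑ i, ENNReal.ofReal (p i) • Measure.dirac (T i)

/-- Generalized inverse of the cdf `t ↦ μ_T (Iic t)` of `μ_T`. -/
noncomputable def dFinv {n : ℕ} (p T : Fin n → ℝ) (q : ℝ) : ℝ :=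
  sInf {t : ℝ | q ≤ (muT p T (Set.Iic t)).toReal}

/-- The α–γ expectation of `μ_T`. -/
noncomputable def dEag {n : ℕ} (p T : Fin n → ℝ) (a g : ℝ) : ℝ :=
  (1 / (g - a)) * ∫ s in a..g, dFinv p T s

/-- The generalized inverse (left-continuous quantile function) of the cdf
`t ↦ μ (-∞, t]`. It extends `dFinv` to finite measures on the line. At a level `q ≤ 0`, or at one
exceeding every value of the cdf, the infimum is over `ℝ` or `∅` and takes the junk value `0`. -/
noncomputable def quantile (μ : Measure ℝ) (q : ℝ) : ℝ :=
  sInf {t : ℝ | q ≤ μ.real (Set.Iic t)}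

/-- The `α`–`γ` expectation of a finite measure on the line, extending `dEag`: the mean of
its quantile function over the levels between `α` and `γ`. -/
noncomputable def alphaGammaExpectation (μ : Measure ℝ) (α γ : ℝ) : ℝ :=
  (1 / (γ - α)) * ∫ s in α..γ, quantile μ s

lemma quantile_eqOn_const_of_cdf_notMem_Ico {μ : Measure ℝ} {α γ : ℝ}
    (hF : ∀ t, μ.real (Set.Iic t) ∉ Set.Ico α γ) :
    Set.EqOn (quantile μ) (fun _ => quantile μ γ) (Set.Icc α γ) := by
  intro s hs
  have level_iff (t : ℝ) : s ≤ μ.real (Set.Iic t) ↔ γ ≤ μ.real (Set.Iic t) :=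
    ⟨fun h => not_lt.1 fun hlt => hF t ⟨hs.1.trans h, hlt⟩, hs.2.trans⟩
  simp only [quantile, level_iff]

theorem alpha_gamma_expectation_eq_VaR_of_no_jump_general {μ : Measure ℝ} [IsFiniteMeasure μ]
    {α γ : ℝ} (_hα : 0 ≤ α) (hαγ : α < γ) (_hγ : γ ≤ μ.real Set.univ)
    (hF : ∀ t, μ.real (Set.Iic t) ∉ Set.Ico α γ) :
    alphaGammaExpectation μ α γ = quantile μ γ := by
  have hγα : γ - α ≠ 0 := (sub_pos.2 hαγ).ne'
  calc alphaGammaExpectation μ α γ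
      = (1 / (γ - α)) * ∫ _ in α..γ, quantile μ γ := by
        rw [alphaGammaExpectation, intervalIntegral.integral_congr]
        simpa only [Set.uIcc_of_le hαγ.le] using quantile_eqOn_const_of_cdf_notMem_Ico hF
    _ = (1 / (γ - α)) * ((γ - α) * quantile μ γ) := by
        rw [intervalIntegral.integral_const, smul_eq_mul]
    _ = quantile μ γ := by field_simp

instance isFiniteMeasure_ofReal_smul_dirac (r x : ℝ) :
    IsFiniteMeasure (ENNReal.ofReal r • Measure.dirac x) :=
  Measure.smul_finite _ ENNReal.ofReal_ne_top

instance isFiniteMeasure_muT {n : ℕ} (p T : Fin n → ℝ) : IsFiniteMeasure (muT p T) := by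
  unfold muT
  infer_instance

lemma muT_real_eq_sum {n : ℕ} {p : Fin n → ℝ} (hp : ∀ i, 0 ≤ p i) (T : Fin n → ℝ) (s : Set ℝ)
    [DecidablePred (· ∈ s)] : (muT p T).real s = ∑ i with T i ∈ s, p i := by
  have atom (i : Fin n) : (ENNReal.ofReal (p i) • Measure.dirac (T i)).real s =
      if T i ∈ s then p i else 0 := by
    by_cases h : T i ∈ s <;> simp [measureReal_def, h, hp i]
  calc (muT p T).real s
      = ∑ i, (ENNReal.ofReal (p i) • Measure.dirac (T i)).real s := by
        simp only [muT, measureReal_def, Measure.coe_finsetSum, Finset.sum_apply]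
        exact ENNReal.toReal_sum fun i _ => measure_ne_top _ _
    _ = ∑ i with T i ∈ s, p i := by simp only [atom, Finset.sum_filter]

/-- If no subset `S ⊆ {1,…,n}` satisfies `α ≤ Σ_{i∈S} p_i < γ`, then
`E_{α,γ}(μ_T) = F⁻¹(γ)` for every `T`. -/
theorem alpha_gamma_expectation_eq_VaR_of_no_jump
    {n : ℕ} (hn : 1 ≤ n) (p : Fin n → ℝ)
    (hp : ∀ i, 0 < p i) (hsum : ∑ i, p i = 1)
    (α γ : ℝ) (h0 : 0 ≤ α) (h1 : α < γ) (h2 : γ ≤ 1)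
    (hno : ¬ ∃ S : Finset (Fin n), α ≤ ∑ i ∈ S, p i ∧ ∑ i ∈ S, p i < γ) :
    ∀ T : Fin n → ℝ, dEag p T α γ = dFinv p T γ := by
  intro T
  have hcdf (t : ℝ) : (muT p T).real (Set.Iic t) = ∑ i with T i ∈ Set.Iic t, p i :=
    muT_real_eq_sum (fun i => (hp i).le) T _
  have hmass : (muT p T).real Set.univ = 1 := by
    simp [muT_real_eq_sum (fun i => (hp i).le), hsum]
  change alphaGammaExpectation (muT p T) α γ = quantile (muT p T) γ
  exact alpha_gamma_expectation_eq_VaR_of_no_jump_general h0 h1 (h2.trans_eq hmass.symm)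
    fun t ht => hno ⟨_, hcdf t ▸ ht⟩
end

section
/- Assume the entries of T are pairwise distinct, and let 0 ≤ α < γ ≤ 1. Consider the max–min problem max_{w∈W_α} min_{w'∈W_γ} g(w,w'), where g(w,w') = Σ_{i=1}^n T_i p_i (w_i − w'_i). If (w*, w'*) is an optimal pair — i.e., w* ∈ W_α attains the supremum over W_α of the function w ↦ inf_{w'∈W_γ} g(w,w'), and w'* ∈ W_γ attains the infimum over W_γ of w' ↦ g(w*,w') — then w*_i ≥ w'*_i for every i ∈ {1,…,n}. -/
/-!
The objective is separable, so both players of an optimal pair maximize the same linear functional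
`x ↦ ∑ i, T i * p i * x i`, one on `W_α` and the other on `W_γ`. Moving `p`-mass from `i` to `j`
raises this functional whenever `T i < T j`, so a maximizer is `0` at `i` or `1` at `j`. Now if
`ws i > w i`, then, `w` having the larger total mass, `ws j < w j` for some `j`. Should `T i < T j`,
mass can be moved from `i` to `j` in `ws`; should `T j < T i`, it can be moved from `j` to `i`
in `w`; each contradicts maximality.
-/

/-- The polytope `W_β = {w ∈ [0,1]^n : Σ_i w_i p_i = 1 − β}`. -/
def Wset {n : ℕ} (p : Fin n → ℝ) (β : ℝ) : Set (Fin n → ℝ) :=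
  {w | (∀ i, w i ∈ Set.Icc (0:ℝ) 1) ∧ ∑ i, w i * p i = 1 - β}

theorem isMaxOn_left_right_of_maxmin_sub {X Y R : Type*} [AddCommGroup R]
    [ConditionallyCompleteLattice R] [IsOrderedAddMonoid R] {f : X → R} {g : Y → R}
    {s : Set X} {t : Set Y} {x : X} {y : Y} (hy : y ∈ t)
    (hmax : IsMaxOn (fun x' => sInf ((fun y' => f x' - g y') '' t)) s x)
    (hmin : IsMinOn (fun y' => f x - g y') t y) :
    IsMaxOn f s x ∧ IsMaxOn g t y := by
  have hg : IsMaxOn g t y := fun y' hy' => (sub_le_sub_iff_left (f x)).1 (hmin hy')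
  have hinf (x' : X) : sInf ((fun y' => f x' - g y') '' t) = f x' - g y := by
    refine IsLeast.csInf_eq ⟨Set.mem_image_of_mem _ hy, ?_⟩
    rintro _ ⟨y', hy', rfl⟩
    exact sub_le_sub_left (hg hy') _
  simp only [hinf] at hmax
  exact ⟨fun x' hx' => (sub_le_sub_iff_right (g y)).1 (hmax hx'), hg⟩

theorem exists_lt_of_dotProduct_le_of_lt {ι R : Type*} [Fintype ι] [Semiring R] [LinearOrder R]
    [IsStrictOrderedRing R] {p x y : ι → R} {i : ι} (hp : ∀ k, 0 < p k) (hle : y ⬝ᵥ p ≤ x ⬝ᵥ p)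
    (hi : x i < y i) : ∃ j, y j < x j := by
  by_contra! hxy
  refine hle.not_gt (Finset.sum_lt_sum (fun k _ => ?_) ⟨i, Finset.mem_univ i, ?_⟩)
  · exact mul_le_mul_of_nonneg_right (hxy k) (hp k).le
  · exact mul_lt_mul_of_pos_right hi (hp i)

/-- The feasible set of the continuous knapsack problem with bounds `l ≤ x ≤ u`, weights `p` and
total weight exactly `c`. The polytope `W_β` is the case `l = 0`, `u = 1`, `c = 1 - β`. -/
def knapsackPolytope {ι R : Type*} [Fintype ι] [Mul R] [AddCommMonoid R] [Preorder R]
    (l u p : ι → R) (c : R) : Set (ι → R) :=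
  {x | (∀ i, x i ∈ Set.Icc (l i) (u i)) ∧ x ⬝ᵥ p = c}

/-- The direction that moves weight `δ` from coordinate `i` to coordinate `j`, where a unit of
coordinate `k` weighs `p k`. -/
def weightTransfer {ι 𝕜 : Type*} [DecidableEq ι] [Field 𝕜] (p : ι → 𝕜) (i j : ι) (δ : 𝕜) :
    ι → 𝕜 :=
  Pi.single j (δ / p j) - Pi.single i (δ / p i)

section Exchange

variable {ι 𝕜 : Type*} [Fintype ι] [Field 𝕜] {l u p T x y : ι → 𝕜} {c d δ : 𝕜} {i j : ι}

theorem mul_dotProduct_weightTransfer [DecidableEq ι] (hi : p i ≠ 0) (hj : p j ≠ 0) :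
    (T * p) ⬝ᵥ weightTransfer p i j δ = (T j - T i) * δ := by
  simp only [weightTransfer, dotProduct_sub, dotProduct_single, Pi.mul_apply]
  field_simp

variable [LinearOrder 𝕜] [IsStrictOrderedRing 𝕜]

theorem add_weightTransfer_mem_knapsackPolytope [DecidableEq ι] (hx : x ∈ knapsackPolytope l u p c)
    (hij : i ≠ j) (hi : 0 < p i) (hj : 0 < p j) (hδ : 0 ≤ δ)
    (hδi : δ ≤ (x i - l i) * p i) (hδj : δ ≤ (u j - x j) * p j) :
    x + weightTransfer p i j δ ∈ knapsackPolytope l u p c := by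
  obtain ⟨hbounds, hweight⟩ := hx
  have hloss : δ / p i ≤ x i - l i := (div_le_iff₀ hi).2 hδi
  have hgain : δ / p j ≤ u j - x j := (div_le_iff₀ hj).2 hδj
  have hloss₀ : 0 ≤ δ / p i := div_nonneg hδ hi.le
  have hgain₀ : 0 ≤ δ / p j := div_nonneg hδ hj.le
  refine ⟨fun k => ?_, ?_⟩
  · obtain ⟨hl, hu⟩ := hbounds k
    rcases eq_or_ne k i with rfl | hki
    · simp only [weightTransfer, Pi.add_apply, Pi.sub_apply, Pi.single_eq_same,
        Pi.single_eq_of_ne hij]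
      constructor <;> linarith
    rcases eq_or_ne k j with rfl | hkj
    · simp only [weightTransfer, Pi.add_apply, Pi.sub_apply, Pi.single_eq_same,
        Pi.single_eq_of_ne hki]
      constructor <;> linarith
    · simpa [weightTransfer, hki, hkj] using hbounds k
  · have hzero : p ⬝ᵥ weightTransfer p i j δ = 0 := by
      simpa using mul_dotProduct_weightTransfer (T := 1) (δ := δ) hi.ne' hj.ne'
    rw [add_dotProduct, dotProduct_comm (weightTransfer p i j δ), hzero, add_zero, hweight]

theorem eq_lower_or_eq_upper_of_isMaxOn_knapsackPolytope (hp : ∀ k, 0 < p k)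
    (hx : x ∈ knapsackPolytope l u p c)
    (hmax : IsMaxOn (fun z => (T * p) ⬝ᵥ z) (knapsackPolytope l u p c) x) (hTij : T i < T j) :
    x i = l i ∨ x j = u j := by
  classical
  by_contra! hne
  have hxi : 0 < x i - l i := sub_pos.2 ((hx.1 i).1.lt_of_ne hne.1.symm)
  have hxj : 0 < u j - x j := sub_pos.2 ((hx.1 j).2.lt_of_ne hne.2)
  let δ := min ((x i - l i) * p i) ((u j - x j) * p j)
  have hδ : 0 < δ := lt_min (mul_pos hxi (hp i)) (mul_pos hxj (hp j))
  have hmem : x + weightTransfer p i j δ ∈ knapsackPolytope l u p c :=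
    add_weightTransfer_mem_knapsackPolytope hx (ne_of_apply_ne T hTij.ne) (hp i) (hp j) hδ.le
      (min_le_left _ _) (min_le_right _ _)
  have hle : (T * p) ⬝ᵥ (x + weightTransfer p i j δ) ≤ (T * p) ⬝ᵥ x := hmax hmem
  rw [dotProduct_add, mul_dotProduct_weightTransfer (hp i).ne' (hp j).ne',
    add_le_iff_nonpos_right] at hle
  exact hle.not_gt (mul_pos (sub_pos.2 hTij) hδ)

theorem le_of_isMaxOn_knapsackPolytope (hp : ∀ k, 0 < p k) (hT : Function.Injective T)
    (hdc : d ≤ c) (hx : x ∈ knapsackPolytope l u p c) (hy : y ∈ knapsackPolytope l u p d)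
    (hxmax : IsMaxOn (fun z => (T * p) ⬝ᵥ z) (knapsackPolytope l u p c) x)
    (hymax : IsMaxOn (fun z => (T * p) ⬝ᵥ z) (knapsackPolytope l u p d) y) : y ≤ x := by
  intro i
  by_contra! hi
  obtain ⟨j, hj⟩ : ∃ j, y j < x j :=
    exists_lt_of_dotProduct_le_of_lt hp (by rwa [hx.2, hy.2]) hi
  have hij : i ≠ j := by
    rintro rfl
    exact lt_asymm hi hj
  rcases (hT.ne hij).lt_or_gt with hlt | hgt
  · rcases eq_lower_or_eq_upper_of_isMaxOn_knapsackPolytope hp hy hymax hlt with hyi | hyj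
    · exact (hx.1 i).1.not_gt (hyi ▸ hi)
    · exact (hx.1 j).2.not_gt (hyj ▸ hj)
  · rcases eq_lower_or_eq_upper_of_isMaxOn_knapsackPolytope hp hx hxmax hgt with hxj | hxi
    · exact (hy.1 j).1.not_gt (hxj ▸ hj)
    · exact (hy.1 i).2.not_gt (hxi ▸ hi)

end Exchange

theorem maxmin_optimal_pair_componentwise_general {ι : Type*} [Fintype ι]
    {l u p T x y : ι → ℝ} {c d : ℝ} (hp : ∀ i, 0 < p i) (hT : Function.Injective T) (hdc : d ≤ c)
    (hx : x ∈ knapsackPolytope l u p c)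
    (hmax : IsMaxOn (fun x' => sInf ((fun y' => (T * p) ⬝ᵥ (x' - y')) '' knapsackPolytope l u p d))
      (knapsackPolytope l u p c) x)
    (hy : y ∈ knapsackPolytope l u p d)
    (hmin : IsMinOn (fun y' => (T * p) ⬝ᵥ (x - y')) (knapsackPolytope l u p d) y) :
    y ≤ x := by
  simp only [dotProduct_sub] at hmax hmin
  obtain ⟨hxmax, hymax⟩ := isMaxOn_left_right_of_maxmin_sub hy hmax hmin
  exact le_of_isMaxOn_knapsackPolytope hp hT hdc hx hy hxmax hymax

/-- For pairwise-distinct `T` and `0 ≤ α < γ ≤ 1`, any optimal pair `(w*, w'*)`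
of the max–min problem `max_{w∈W_α} min_{w'∈W_γ} Σ_i T_i p_i (w_i − w'_i)`
satisfies `w*_i ≥ w'*_i` for every `i`. -/
theorem maxmin_optimal_pair_componentwise
    {n : ℕ} (hn : 1 ≤ n) (p T : Fin n → ℝ)
    (hp : ∀ i, 0 < p i) (hsum : ∑ i, p i = 1)
    (hT : Function.Injective T)
    (α γ : ℝ) (h0 : 0 ≤ α) (h1 : α < γ) (h2 : γ ≤ 1)
    (w ws : Fin n → ℝ)
    (hw : w ∈ Wset p α)
    (hmax : ∀ u ∈ Wset p α,
      sInf ((fun w' => ∑ i, T i * p i * (u i - w' i)) '' Wset p γ) ≤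
        sInf ((fun w' => ∑ i, T i * p i * (w i - w' i)) '' Wset p γ))
    (hws : ws ∈ Wset p γ)
    (hmin : ∀ w' ∈ Wset p γ,
      ∑ i, T i * p i * (w i - ws i) ≤ ∑ i, T i * p i * (w i - w' i)) :
    ∀ i, ws i ≤ w i :=
  maxmin_optimal_pair_componentwise_general (l := 0) (u := 1) hp hT (sub_le_sub_left h1.le 1)
    hw hmax hws hmin
end

section
/- Let α ∈ [0,1). Then the supremum of the linear functional w ↦ Σ_{i=1}^n T_i w_i p_i over the polytope W_α equals the integral of the quantile function of μ_T over [α,1]: sup{Σ_{i=1}^n T_i w_i p_i : w ∈ W_α} = ∫_α^1 F⁻¹(s) ds. In particular, E_{α,1}(μ_T) = (1/(1−α)) · sup{Σ_{i=1}^n T_i w_i p_i : w ∈ W_α}. -/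
open MeasureTheory

/-- The randomized tests of mass `m` on a measure space: measurable weights with values in `[0, 1]`
and integral `m`. They generalize the polytope `W_β`, for which `m = 1 - β`. -/
def randomizedTests {Ω : Type*} [MeasurableSpace Ω] (P : Measure Ω) (m : ℝ) : Set (Ω → ℝ) :=
  {w | AEMeasurable w P ∧ (∀ ω, w ω ∈ Set.Icc (0 : ℝ) 1) ∧ ∫ ω, w ω ∂P = m}

/-- The measure on a finite type with point masses `p i`, negative `p i` being truncated to `0`. -/
noncomputable def pointMassMeasure {ι : Type*} [Fintype ι] [MeasurableSpace ι] (p : ι → ℝ) :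
    Measure ι :=
  ∑ i, ENNReal.ofReal (p i) • Measure.dirac i

section Quantile

variable {μ : Measure ℝ} [IsProbabilityMeasure μ]

open ProbabilityTheory Filter Topology in
theorem quantile_le_iff {q : ℝ} (hq : q ∈ Set.Ioo (0 : ℝ) 1) (t : ℝ) :
    quantile μ q ≤ t ↔ q ≤ μ.real (Set.Iic t) := by
  simp only [quantile, ← cdf_eq_real]
  have hne : {t | q ≤ cdf μ t}.Nonempty :=
    ((tendsto_cdf_atTop μ).eventually (le_mem_nhds hq.2)).exists
  have hbdd : BddBelow {t | q ≤ cdf μ t} := by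
    obtain ⟨b, hb⟩ := ((tendsto_cdf_atBot μ).eventually (gt_mem_nhds hq.1)).exists
    exact ⟨b, fun t ht => le_of_lt ((monotone_cdf μ).reflect_lt (hb.trans_le ht))⟩
  refine ⟨fun h => ?_, fun h => csInf_le hbdd h⟩
  have hright : Tendsto (cdf μ) (𝓝[>] t) (𝓝 (cdf μ t)) :=
    ((cdf μ).right_continuous t).mono Set.Ioi_subset_Ici_self
  refine ge_of_tendsto hright ?_
  filter_upwards [self_mem_nhdsWithin] with u hu
  obtain ⟨v, hv, hvu⟩ := exists_lt_of_csInf_lt hne (h.trans_lt hu)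
  exact hv.trans (monotone_cdf μ hvu.le)

theorem le_measureReal_Iic_quantile {q : ℝ} (hq : q ∈ Set.Ioo (0 : ℝ) 1) :
    q ≤ μ.real (Set.Iic (quantile μ q)) :=
  (quantile_le_iff hq _).1 le_rfl

theorem monotoneOn_quantile : MonotoneOn (quantile μ) (Set.Ioo 0 1) := fun _ ha _ hb hab =>
  (quantile_le_iff ha _).2 (hab.trans (le_measureReal_Iic_quantile hb))

theorem aemeasurable_quantile : AEMeasurable (quantile μ) (volume.restrict (Set.Ioo 0 1)) :=
  aemeasurable_restrict_of_monotoneOn measurableSet_Ioo monotoneOn_quantile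

theorem map_quantile : (volume.restrict (Set.Ioo (0 : ℝ) 1)).map (quantile μ) = μ := by
  have : IsProbabilityMeasure (volume.restrict (Set.Ioo (0 : ℝ) 1)) := ⟨by simp⟩
  have := Measure.isProbabilityMeasure_map (aemeasurable_quantile (μ := μ))
  refine Measure.ext_of_Iic _ _ fun t => ?_
  have hpreimage : quantile μ ⁻¹' Set.Iic t ∩ Set.Ioo 0 1 =
      Set.Iic (μ.real (Set.Iic t)) ∩ Set.Ioo 0 1 := by
    ext s
    exact and_congr_left fun hs => quantile_le_iff hs t
  calc (volume.restrict (Set.Ioo (0 : ℝ) 1)).map (quantile μ) (Set.Iic t)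
      = volume.restrict (Set.Ioo 0 1) (Set.Iic (μ.real (Set.Iic t))) := by
        rw [Measure.map_apply_of_aemeasurable aemeasurable_quantile measurableSet_Iic,
          Measure.restrict_apply' measurableSet_Ioo, hpreimage,
          Measure.restrict_apply' measurableSet_Ioo]
    _ = volume (Set.Ioc 0 (μ.real (Set.Iic t))) := by
        rw [Measure.restrict_congr_set Ioo_ae_eq_Ioc, Measure.restrict_apply' measurableSet_Ioc,
          Set.Iic_inter_Ioc_of_le measureReal_le_one]
    _ = μ (Set.Iic t) := by rw [Real.volume_Ioc, sub_zero, ofReal_measureReal]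

theorem measureReal_Iio_quantile_le {q : ℝ} (hq : q ∈ Set.Ioo (0 : ℝ) 1) :
    μ.real (Set.Iio (quantile μ q)) ≤ q := by
  have hpreimage : quantile μ ⁻¹' Set.Iio (quantile μ q) ∩ Set.Ioo 0 1 ⊆ Set.Ioo 0 q :=
    fun s hs => ⟨hs.2.1, monotoneOn_quantile.reflect_lt hs.2 hq hs.1⟩
  calc μ.real (Set.Iio (quantile μ q))
      = ((volume.restrict (Set.Ioo 0 1)).map (quantile μ)).real (Set.Iio (quantile μ q)) := by
        rw [map_quantile]
    _ = volume.real (quantile μ ⁻¹' Set.Iio (quantile μ q) ∩ Set.Ioo 0 1) := by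
        rw [map_measureReal_apply_of_aemeasurable aemeasurable_quantile measurableSet_Iio,
          measureReal_restrict_apply' measurableSet_Ioo]
    _ ≤ volume.real (Set.Ioo 0 q) := measureReal_mono hpreimage measure_Ioo_lt_top.ne
    _ = q := by simp [hq.1.le]

theorem integrableOn_quantile (hμ : Integrable id μ) :
    IntegrableOn (quantile μ) (Set.Ioo 0 1) := by
  rw [← map_quantile (μ := μ)] at hμ
  exact hμ.comp_aemeasurable aemeasurable_quantile

theorem setIntegral_comp_quantile {g : ℝ → ℝ} (hg : AEStronglyMeasurable g μ) :
    ∫ s in Set.Ioo (0 : ℝ) 1, g (quantile μ s) = ∫ x, g x ∂μ := by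
  conv_rhs => rw [← map_quantile (μ := μ)]
  exact (integral_map aemeasurable_quantile (by rwa [map_quantile])).symm

theorem integral_quantile : ∫ s in (0 : ℝ)..1, quantile μ s = ∫ x, x ∂μ := by
  rw [intervalIntegral.integral_of_le zero_le_one, integral_Ioc_eq_integral_Ioo]
  exact setIntegral_comp_quantile aestronglyMeasurable_id

theorem integral_quantile_tail (hμ : Integrable id μ) {α : ℝ} (hα : α ∈ Set.Ioo (0 : ℝ) 1) :
    ∫ s in α..(1 : ℝ), quantile μ s =
      quantile μ α * (1 - α) + ∫ x, max (x - quantile μ α) 0 ∂μ := by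
  set c := quantile μ α
  have hsub : Set.Ioo α 1 ⊆ Set.Ioo 0 1 := Set.Ioo_subset_Ioo_left hα.1.le
  have hexcess : ∫ x, max (x - c) 0 ∂μ = ∫ s in Set.Ioo α 1, (quantile μ s - c) := by
    rw [← setIntegral_comp_quantile (by fun_prop),
      setIntegral_eq_of_subset_of_forall_sdiff_eq_zero measurableSet_Ioo hsub]
    · refine setIntegral_congr_fun measurableSet_Ioo fun s hs => ?_
      exact max_eq_left (sub_nonneg.2 (monotoneOn_quantile hα (hsub hs) hs.1.le))
    · rintro s ⟨hs, hs'⟩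
      have hsα : s ≤ α := not_lt.1 fun h => hs' ⟨h, hs.2⟩
      exact max_eq_right (sub_nonpos.2 (monotoneOn_quantile hs hα hsα))
  rw [hexcess, integral_sub ((integrableOn_quantile hμ).mono_set hsub) (by simp),
    setIntegral_const, Real.volume_real_Ioo_of_le hα.2.le, smul_eq_mul,
    intervalIntegral.integral_of_le hα.2.le, integral_Ioc_eq_integral_Ioo]
  ring

end Quantile

section RandomizedTests

variable {Ω : Type*} [MeasurableSpace Ω] {P : Measure Ω} {X w : Ω → ℝ} {m : ℝ}

theorem integrable_mul_of_mem_randomizedTests (hX : Integrable X P)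
    (hw : w ∈ randomizedTests P m) : Integrable (fun ω => X ω * w ω) P :=
  hX.mul_bdd (c := 1) hw.1.aestronglyMeasurable <| ae_of_all _ fun ω => by
    rw [Real.norm_of_nonneg (hw.2.1 ω).1]
    exact (hw.2.1 ω).2

theorem integrable_of_mem_randomizedTests [IsFiniteMeasure P] (hw : w ∈ randomizedTests P m) :
    Integrable w P := by
  simpa only [one_mul] using integrable_mul_of_mem_randomizedTests (integrable_const 1) hw

theorem comp_mem_randomizedTests {φ : ℝ → ℝ} (hX : AEMeasurable X P)
    (hφ : φ ∈ randomizedTests (P.map X) m) : φ ∘ X ∈ randomizedTests P m :=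
  ⟨hφ.1.comp_aemeasurable hX, fun ω => hφ.2.1 (X ω),
    (integral_map hX hφ.1.aestronglyMeasurable).symm.trans hφ.2.2⟩

theorem integral_mul_eq_of_mem_randomizedTests [IsFiniteMeasure P] (hX : Integrable X P)
    (hw : w ∈ randomizedTests P m) (c : ℝ) :
    ∫ ω, X ω * w ω ∂P = c * m + ∫ ω, (X ω - c) * w ω ∂P := by
  have hXc : Integrable (fun ω => X ω - c) P := hX.sub (integrable_const c)
  rw [← hw.2.2, ← integral_const_mul, ← integral_add
    ((integrable_of_mem_randomizedTests hw).const_mul c)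
    (integrable_mul_of_mem_randomizedTests hXc hw)]
  exact integral_congr_ae (ae_of_all _ fun ω => by ring)

theorem integral_mul_le_of_mem_randomizedTests [IsFiniteMeasure P] (hX : Integrable X P)
    (hw : w ∈ randomizedTests P m) (c : ℝ) :
    ∫ ω, X ω * w ω ∂P ≤ c * m + ∫ ω, max (X ω - c) 0 ∂P := by
  have hXc : Integrable (fun ω => X ω - c) P := hX.sub (integrable_const c)
  rw [integral_mul_eq_of_mem_randomizedTests hX hw c]
  gcongr
  · exact integrable_mul_of_mem_randomizedTests hXc hw
  · exact hXc.pos_part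
  · intro ω
    exact (mul_le_mul_of_nonneg_right (le_max_left _ 0) (hw.2.1 ω).1).trans
      (mul_le_of_le_one_right (le_max_right _ _) (hw.2.1 ω).2)

theorem exists_threshold_mem_randomizedTests {μ : Measure ℝ} [IsProbabilityMeasure μ] {α c : ℝ}
    (hIio_le : μ.real (Set.Iio c) ≤ α) (hle_Iic : α ≤ μ.real (Set.Iic c)) :
    ∃ φ ∈ randomizedTests μ (1 - α), ∀ x, (x - c) * φ x = max (x - c) 0 := by
  obtain ⟨a, b, ha, hb, hab, hα⟩ : α ∈ segment ℝ (μ.real (Set.Iio c)) (μ.real (Set.Iic c)) := by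
    rw [segment_eq_Icc (hIio_le.trans hle_Iic)]
    exact ⟨hIio_le, hle_Iic⟩
  have hIio : Integrable ((Set.Iio c).indicator (1 : ℝ → ℝ)) μ :=
    (integrable_const 1).indicator measurableSet_Iio
  have hIic : Integrable ((Set.Iic c).indicator (1 : ℝ → ℝ)) μ :=
    (integrable_const 1).indicator measurableSet_Iic
  have hsum : Integrable
      (fun x => a * (Set.Iio c).indicator 1 x + b * (Set.Iic c).indicator 1 x) μ :=
    (hIio.const_mul a).add (hIic.const_mul b)
  refine ⟨fun x => 1 - (a * (Set.Iio c).indicator 1 x + b * (Set.Iic c).indicator 1 x),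
    ⟨((integrable_const 1).sub hsum).aemeasurable, fun x => ?_, ?_⟩, fun x => ?_⟩
  · rcases lt_trichotomy x c with h | rfl | h
    · simp [h, h.le, hab]
    · simp [hb, show b ≤ 1 by linarith]
    · simp [h.not_gt, h.not_ge]
  · rw [integral_sub (integrable_const 1) hsum, integral_add (hIio.const_mul a) (hIic.const_mul b),
      integral_const_mul, integral_const_mul, integral_indicator_one measurableSet_Iio,
      integral_indicator_one measurableSet_Iic, ← hα]
    simp
  · rcases lt_trichotomy x c with h | rfl | h
    · simp [h, h.le, hab]
    · simp
    · simp [h.not_gt, h.not_ge, h.le]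

theorem isGreatest_integral_mul_randomizedTests_of_quantile [IsProbabilityMeasure P]
    (hX : Integrable X P) {α c : ℝ}
    (hIio_le : (P.map X).real (Set.Iio c) ≤ α) (hle_Iic : α ≤ (P.map X).real (Set.Iic c)) :
    IsGreatest ((fun w => ∫ ω, X ω * w ω ∂P) '' randomizedTests P (1 - α))
      (c * (1 - α) + ∫ ω, max (X ω - c) 0 ∂P) := by
  have := Measure.isProbabilityMeasure_map hX.aemeasurable
  obtain ⟨φ, hφ, hmax⟩ := exists_threshold_mem_randomizedTests hIio_le hle_Iic
  refine ⟨⟨φ ∘ X, comp_mem_randomizedTests hX.aemeasurable hφ, ?_⟩, ?_⟩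
  · dsimp only
    rw [integral_mul_eq_of_mem_randomizedTests hX (comp_mem_randomizedTests hX.aemeasurable hφ) c]
    simp only [Function.comp_apply, hmax]
  · rintro _ ⟨w, hw, rfl⟩
    exact integral_mul_le_of_mem_randomizedTests hX hw c

theorem isGreatest_integral_mul_randomizedTests_zero [IsFiniteMeasure P] :
    IsGreatest ((fun w => ∫ ω, X ω * w ω ∂P) '' randomizedTests P 0) 0 := by
  refine ⟨⟨0, ⟨aemeasurable_const, by simp, by simp⟩, by simp⟩, ?_⟩
  rintro _ ⟨w, hw, rfl⟩
  have hw0 : w =ᵐ[P] 0 := (integral_eq_zero_iff_of_nonneg (fun ω => (hw.2.1 ω).1)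
    (integrable_of_mem_randomizedTests hw)).1 hw.2.2
  refine (integral_eq_zero_of_ae ?_).le
  filter_upwards [hw0] with ω hω
  simp [hω]

theorem isGreatest_integral_mul_randomizedTests_one [IsProbabilityMeasure P] :
    IsGreatest ((fun w => ∫ ω, X ω * w ω ∂P) '' randomizedTests P 1) (∫ ω, X ω ∂P) := by
  refine ⟨⟨1, ⟨aemeasurable_const, by simp, by simp⟩, by simp⟩, ?_⟩
  rintro _ ⟨w, hw, rfl⟩
  have hw1 : w =ᵐ[P] fun _ => 1 := (integral_eq_iff_of_ae_le
    (integrable_of_mem_randomizedTests hw) (integrable_const 1)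
    (ae_of_all _ fun ω => (hw.2.1 ω).2)).1 (by simp [hw.2.2])
  refine (integral_congr_ae ?_).le
  filter_upwards [hw1] with ω hω
  simp [hω]

theorem sup_over_W_eq_integral_quantile_general [IsProbabilityMeasure P] (hX : Integrable X P)
    {α : ℝ} (h0 : 0 ≤ α) (h1 : α ≤ 1) :
    IsGreatest ((fun w => ∫ ω, X ω * w ω ∂P) '' randomizedTests P (1 - α))
      (∫ s in α..(1 : ℝ), quantile (P.map X) s) := by
  have := Measure.isProbabilityMeasure_map hX.aemeasurable
  -- `X` need not have a `0`- or `1`-quantile, so the extreme levels are treated separately.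
  rcases h0.eq_or_lt with rfl | h0
  · rw [integral_quantile, integral_map hX.aemeasurable (by fun_prop), sub_zero]
    exact isGreatest_integral_mul_randomizedTests_one
  rcases h1.eq_or_lt with rfl | h1
  · rw [intervalIntegral.integral_same, sub_self]
    exact isGreatest_integral_mul_randomizedTests_zero
  have hid : Integrable id (P.map X) :=
    (integrable_map_measure aestronglyMeasurable_id hX.aemeasurable).2 hX
  rw [integral_quantile_tail hid ⟨h0, h1⟩, integral_map hX.aemeasurable (by fun_prop)]
  exact isGreatest_integral_mul_randomizedTests_of_quantile hX
    (measureReal_Iio_quantile_le ⟨h0, h1⟩) (le_measureReal_Iic_quantile ⟨h0, h1⟩)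

end RandomizedTests

section PointMassMeasure

variable {ι : Type*} [Fintype ι] [MeasurableSpace ι] {p : ι → ℝ}

theorem isProbabilityMeasure_pointMassMeasure (hp : ∀ i, 0 ≤ p i) (hsum : ∑ i, p i = 1) :
    IsProbabilityMeasure (pointMassMeasure p) :=
  ⟨by simp [pointMassMeasure, ← ENNReal.ofReal_sum_of_nonneg fun i _ => hp i, hsum]⟩

variable [MeasurableSingletonClass ι]

theorem integrable_pointMassMeasure (f : ι → ℝ) : Integrable f (pointMassMeasure p) :=
  integrable_finsetSum_measure.2 fun _ _ =>
    (integrable_dirac (by simp)).smul_measure ENNReal.ofReal_ne_top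

theorem integral_pointMassMeasure (hp : ∀ i, 0 ≤ p i) (f : ι → ℝ) :
    ∫ i, f i ∂pointMassMeasure p = ∑ i, f i * p i := by
  rw [pointMassMeasure, integral_finsetSum_measure fun i _ =>
    (integrable_dirac (by simp)).smul_measure ENNReal.ofReal_ne_top]
  simp [hp, mul_comm]

end PointMassMeasure

section FiniteWeights

variable {n : ℕ} {p : Fin n → ℝ}

theorem map_pointMassMeasure (p T : Fin n → ℝ) : (pointMassMeasure p).map T = muT p T := by
  ext s hs
  simp only [pointMassMeasure, muT, Measure.map_apply .of_discrete hs, Measure.finsetSum_apply,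
    Measure.smul_apply, Measure.dirac_apply' _ hs, Measure.dirac_apply]
  rfl

theorem dFinv_eq_quantile (p T : Fin n → ℝ) : dFinv p T = quantile (muT p T) := rfl

theorem Wset_eq_randomizedTests (hp : ∀ i, 0 ≤ p i) (β : ℝ) :
    Wset p β = randomizedTests (pointMassMeasure p) (1 - β) := by
  ext w
  simp [Wset, randomizedTests, integral_pointMassMeasure hp, Measurable.of_discrete.aemeasurable]

theorem isGreatest_image_Wset (hp : ∀ i, 0 ≤ p i) (hsum : ∑ i, p i = 1) (T : Fin n → ℝ) {α : ℝ}
    (h0 : 0 ≤ α) (h1 : α ≤ 1) :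
    IsGreatest ((fun w => ∑ i, T i * w i * p i) '' Wset p α) (∫ s in α..(1 : ℝ), dFinv p T s) := by
  have := isProbabilityMeasure_pointMassMeasure hp hsum
  have h := sup_over_W_eq_integral_quantile_general (integrable_pointMassMeasure (p := p) T) h0 h1
  simpa only [integral_pointMassMeasure hp, ← Wset_eq_randomizedTests hp, map_pointMassMeasure,
    ← dFinv_eq_quantile] using h

end FiniteWeights

/-- `sup{Σ_i T_i w_i p_i : w ∈ W_α} = ∫_α^1 F⁻¹(s) ds`, and consequently
`E_{α,1}(μ_T) = (1/(1−α)) · sup{Σ_i T_i w_i p_i : w ∈ W_α}`. -/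
theorem sup_over_W_eq_integral_quantile
    {n : ℕ} (hn : 1 ≤ n) (p T : Fin n → ℝ)
    (hp : ∀ i, 0 < p i) (hsum : ∑ i, p i = 1)
    (α : ℝ) (h0 : 0 ≤ α) (h1 : α < 1) :
    sSup ((fun w => ∑ i, T i * w i * p i) '' Wset p α) =
      (∫ s in α..(1:ℝ), dFinv p T s) ∧
    dEag p T α 1 =
      (1 / (1 - α)) * sSup ((fun w => ∑ i, T i * w i * p i) '' Wset p α) := by
  have hsup := (isGreatest_image_Wset (fun i => (hp i).le) hsum T h0 h1.le).csSup_eq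
  exact ⟨hsup, by rw [dEag, hsup]⟩
end

section
/- Let α ∈ [0,1). Strong linear programming duality holds between the primal problem min{(1−α)·s + Σ_{i=1}^n θ_i : s ∈ ℝ, θ ∈ ℝ^n, θ_i ≥ 0 and θ_i + s·p_i ≥ T_i·p_i for all i} and the dual problem max{Σ_{i=1}^n T_i w_i p_i : w ∈ W_α}: the infimum of the primal objective over its feasible set equals the supremum of the dual objective over W_α, and both optimal values are attained. -/
/-!
The dual is a fractional knapsack problem with profits `c i = T i * p i`, sizes `p i` and capacity
`m = 1 - α`. It is solved greedily: with `s` the upper `m`-quantile of the ratios `c i / p i`, take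
all items of ratio above `s`, none of ratio below `s`, and a fraction of the ties chosen to fill the
capacity exactly. The same `s`, with `θ i = max (c i - s * p i) 0`, is primal feasible, and the two
objectives agree by complementary slackness, so weak duality makes both solutions optimal.
-/

open Finset

variable {ι R 𝕜 : Type*}

/-- The feasible set of the primal program with sizes `p` and profits `c`: pairs `(s, θ)` of a unit
price `s` and surpluses `θ`. The price is the multiplier of the capacity constraint, and `θ i` that
of the bound `w i ≤ 1`. -/
def primalFeasible [CommSemiring R] [PartialOrder R] (p c : ι → R) : Set (R × (ι → R)) :=
  {x | ∀ i, 0 ≤ x.2 i ∧ c i ≤ x.2 i + x.1 * p i}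

theorem mk_max_sub_mem_primalFeasible [CommRing R] [LinearOrder R] [IsOrderedRing R]
    (p c : ι → R) (s : R) :
    (s, fun i => max (c i - s * p i) 0) ∈ primalFeasible p c :=
  fun _ => ⟨le_max_right _ _, sub_le_iff_le_add.1 (le_max_left _ _)⟩

variable [Fintype ι]

/-- The feasible set of the dual program with sizes `p` and capacity `m`: fractional selections of
items that fill the capacity exactly. `Wset p β` is the case of real `p` and `m = 1 - β`. -/
def dualFeasible [CommSemiring R] [PartialOrder R] (p : ι → R) (m : R) : Set (ι → R) :=
  {w | (∀ i, w i ∈ Set.Icc 0 1) ∧ ∑ i, w i * p i = m}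

theorem sum_mul_le_of_mem_dualFeasible_of_mem_primalFeasible
    [CommSemiring R] [PartialOrder R] [IsOrderedRing R] {p c w : ι → R} {m : R} {x : R × (ι → R)}
    (hw : w ∈ dualFeasible p m) (hx : x ∈ primalFeasible p c) :
    ∑ i, c i * w i ≤ m * x.1 + ∑ i, x.2 i := by
  rw [← hw.2, sum_mul, ← sum_add_distrib]
  refine sum_le_sum fun i _ => ?_
  obtain ⟨hw0, hw1⟩ := hw.1 i
  calc
    c i * w i ≤ (x.2 i + x.1 * p i) * w i := mul_le_mul_of_nonneg_right (hx i).2 hw0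
    _ = w i * p i * x.1 + x.2 i * w i := by ring
    _ ≤ w i * p i * x.1 + x.2 i := by grw [mul_le_of_le_one_right (hx i).1 hw1]

theorem sum_mul_eq_of_complementary_slackness [CommRing R] [LinearOrder R] [IsOrderedRing R]
    {p c w : ι → R} {m s : R}
    (hw : w ∈ dualFeasible p m) (h_one : ∀ i, s * p i < c i → w i = 1)
    (h_zero : ∀ i, c i < s * p i → w i = 0) :
    ∑ i, c i * w i = m * s + ∑ i, max (c i - s * p i) 0 := by
  rw [← hw.2, sum_mul, ← sum_add_distrib]
  refine sum_congr rfl fun i _ => ?_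
  rcases lt_trichotomy (c i) (s * p i) with h | h | h
  · rw [h_zero i h, max_eq_right (sub_nonpos.2 h.le)]; ring
  · rw [h, sub_self, max_self]; ring
  · rw [h_one i h, max_eq_left (sub_nonneg.2 h.le)]; ring

theorem exists_upper_quantile {M β : Type*} [AddCommMonoid M] [LinearOrder M] [LinearOrder β]
    [Nonempty ι] (p : ι → M) (T : ι → β) {m : M} (hm : 0 ≤ m) (hm_le : m ≤ ∑ i, p i) :
    ∃ j, ∑ i with T j < T i, p i ≤ m ∧ m ≤ ∑ i with T j ≤ T i, p i := by
  obtain ⟨a, ha⟩ := Finite.exists_min T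
  have ha_mass : m ≤ ∑ i with T a ≤ T i, p i := by simpa only [ha, filter_true] using hm_le
  obtain ⟨j, hj, hj_max⟩ := exists_max_image {j | m ≤ ∑ i with T j ≤ T i, p i} T
    ⟨a, (mem_filter_univ a).2 ha_mass⟩
  refine ⟨j, ?_, (mem_filter_univ j).1 hj⟩
  rcases (univ.filter fun i => T j < T i).eq_empty_or_nonempty with h | h
  · rwa [h, sum_empty]
  · obtain ⟨k, hk, hk_min⟩ := exists_min_image _ T h
    have hjk : T j < T k := (mem_filter_univ k).1 hk
    have h_filter : (univ.filter fun i => T j < T i) = univ.filter fun i => T k ≤ T i :=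
      filter_congr fun i _ => ⟨fun hi => hk_min i ((mem_filter_univ i).2 hi), hjk.trans_le⟩
    rw [h_filter]
    by_contra! hk_mass
    exact (hj_max k ((mem_filter_univ k).2 hk_mass.le)).not_gt hjk

section OrderedField

variable [Field 𝕜] [LinearOrder 𝕜] [IsStrictOrderedRing 𝕜] {m : 𝕜}

theorem exists_mem_dualFeasible_threshold (p T : ι → 𝕜) (hm : 0 ≤ m) (hm_le : m ≤ ∑ i, p i) :
    ∃ s, ∃ w ∈ dualFeasible p m, (∀ i, s < T i → w i = 1) ∧ ∀ i, T i < s → w i = 0 := by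
  cases isEmpty_or_nonempty ι
  · have hm_zero : m = 0 := hm.antisymm' (by simpa using hm_le)
    simp [dualFeasible, hm_zero]
  obtain ⟨j, h_above, h_atLeast⟩ := exists_upper_quantile p T hm hm_le
  obtain ⟨a, b, ha, hb, hab, h_mass⟩ :
      m ∈ segment 𝕜 (∑ i with T j < T i, p i) (∑ i with T j ≤ T i, p i) := by
    rw [segment_eq_Icc (h_above.trans h_atLeast)]
    exact ⟨h_above, h_atLeast⟩
  refine ⟨T j, fun i => a * (if T j < T i then 1 else 0) + b * (if T j ≤ T i then 1 else 0),
    ⟨fun i => ?_, ?_⟩, fun i hi => by simp [hi, hi.le, hab],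
    fun i hi => by simp [hi.not_ge, hi.not_gt]⟩
  · constructor <;> dsimp only <;> split_ifs <;> linarith
  · simpa [add_mul, mul_assoc, sum_add_distrib, ← mul_sum, ← sum_filter] using h_mass

theorem exists_mem_dualFeasible_complementary_slackness {p : ι → 𝕜} (c : ι → 𝕜)
    (hp : ∀ i, 0 ≤ p i) (hm : 0 ≤ m) (hm_le : m ≤ ∑ i, p i) :
    ∃ s, ∃ w ∈ dualFeasible p m,
      (∀ i, s * p i < c i → w i = 1) ∧ ∀ i, c i < s * p i → w i = 0 := by
  obtain ⟨s, w, ⟨hw, hw_sum⟩, h_one, h_zero⟩ :=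
    exists_mem_dualFeasible_threshold p (fun i => c i / p i) hm hm_le
  -- The ratio is junk where `p i = 0`; such items use no capacity and are taken iff profitable.
  refine ⟨s, fun i => if p i = 0 then (if 0 < c i then 1 else 0) else w i,
    ⟨fun i => ?_, ?_⟩, fun i hi => ?_, fun i hi => ?_⟩
  · dsimp only
    split_ifs
    exacts [⟨zero_le_one, le_rfl⟩, ⟨le_rfl, zero_le_one⟩, hw i]
  · rw [← hw_sum]
    refine sum_congr rfl fun i _ => ?_
    by_cases hpi : p i = 0 <;> simp [hpi]
  · rcases (hp i).eq_or_lt' with hpi | hpi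
    · have hci : 0 < c i := by simpa [hpi] using hi
      simp [hpi, hci]
    · simpa [hpi.ne'] using h_one i ((lt_div_iff₀ hpi).2 hi)
  · rcases (hp i).eq_or_lt' with hpi | hpi
    · have hci : c i < 0 := by simpa [hpi] using hi
      simp [hpi, hci.not_gt]
    · simpa [hpi.ne'] using h_zero i ((div_lt_iff₀ hpi).2 hi)

theorem strong_LP_duality_discrete_CVaR_general {p : ι → 𝕜} (c : ι → 𝕜)
    (hp : ∀ i, 0 ≤ p i) (hm : 0 ≤ m) (hm_le : m ≤ ∑ i, p i) :
    ∃ v : 𝕜,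
      IsLeast ((fun x : 𝕜 × (ι → 𝕜) => m * x.1 + ∑ i, x.2 i) '' primalFeasible p c) v ∧
      IsGreatest ((fun w => ∑ i, c i * w i) '' dualFeasible p m) v := by
  obtain ⟨s, w, hw, h_one, h_zero⟩ :=
    exists_mem_dualFeasible_complementary_slackness c hp hm hm_le
  have hθ := mk_max_sub_mem_primalFeasible p c s
  have h_eq := sum_mul_eq_of_complementary_slackness hw h_one h_zero
  refine ⟨∑ i, c i * w i, ⟨⟨_, hθ, h_eq.symm⟩, ?_⟩, ⟨w, hw, rfl⟩, ?_⟩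
  · rintro _ ⟨x, hx, rfl⟩
    exact sum_mul_le_of_mem_dualFeasible_of_mem_primalFeasible hw hx
  · rintro _ ⟨w', hw', rfl⟩
    exact h_eq ▸ sum_mul_le_of_mem_dualFeasible_of_mem_primalFeasible hw' hθ

end OrderedField

/-- Strong LP duality with attainment: there is a common value `v` which is the
attained minimum of the primal objective `(1−α)·s + Σ_i θ_i` over the primal
feasible region `{(s,θ) : θ_i ≥ 0, θ_i + s·p_i ≥ T_i·p_i}` and the attained
maximum of the dual objective `Σ_i T_i w_i p_i` over `W_α`. -/
theorem strong_LP_duality_discrete_CVaR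
    {n : ℕ} (hn : 1 ≤ n) (p T : Fin n → ℝ)
    (hp : ∀ i, 0 < p i) (hsum : ∑ i, p i = 1)
    (α : ℝ) (h0 : 0 ≤ α) (h1 : α < 1) :
    ∃ v : ℝ,
      IsLeast ((fun sθ : ℝ × (Fin n → ℝ) => (1 - α) * sθ.1 + ∑ i, sθ.2 i) ''
        {sθ : ℝ × (Fin n → ℝ) |
          ∀ i, 0 ≤ sθ.2 i ∧ T i * p i ≤ sθ.2 i + sθ.1 * p i}) v ∧
      IsGreatest ((fun w => ∑ i, T i * w i * p i) '' Wset p α) v := by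
  simp only [mul_right_comm (T _) _ (p _)]
  exact strong_LP_duality_discrete_CVaR_general (fun i => T i * p i) (fun i => (hp i).le)
    (sub_nonneg.2 h1.le) (hsum ▸ sub_le_self 1 h0)
end

section
/- Let α ∈ [0,1). Then the Rockafellar–Uryasev representation holds in the discrete setting: inf_{η ∈ ℝ} ( (1−α)·η + Σ_{i=1}^n p_i · max(T_i − η, 0) ) = sup{Σ_{i=1}^n T_i w_i p_i : w ∈ W_α}. Equivalently, min_η ( η + (1/(1−α)) Σ_{i=1}^n p_i · max(T_i − η, 0) ) = (1/(1−α)) · sup{Σ_{i=1}^n T_i w_i p_i : w ∈ W_α}. -/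
/-! Maximizing `∑ T w p` over weights `w ∈ [0,1]^ι` of total mass `∑ w p = c` is a fractional
knapsack problem, and `η` is the Lagrange multiplier of the mass constraint:
`∑ T w p = c η + ∑ p (w (T - η)) ≤ c η + ∑ p (T - η)⁺`. Equality holds if `w = 1` where `T > η` and
`w = 0` where `T < η`. Such a `w` of mass `c` exists when `η` is a quantile, i.e. when `c` lies
between the masses of `{T > η}` and `{T ≥ η}`: interpolate between the two indicator functions. -/

open Finset

section Quantile

variable {ι α M : Type*} [Fintype ι] [LinearOrder α] [AddCommMonoid M] [LinearOrder M]

theorem exists_sum_filter_lt_le_and_le_sum_filter_le [Nonempty α] (p : ι → M) (T : ι → α) {c : M}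
    (hc0 : 0 ≤ c) (hc : c ≤ ∑ i, p i) :
    ∃ η, ∑ i with η < T i, p i ≤ c ∧ c ≤ ∑ i with η ≤ T i, p i := by
  rcases isEmpty_or_nonempty ι with hι | hι
  · exact ⟨Classical.arbitrary α, by simpa using hc0, by simpa using hc⟩
  obtain ⟨m, hm⟩ := Finite.exists_min T
  have hm_mem : m ∈ ({k | c ≤ ∑ i with T k ≤ T i, p i} : Finset ι) := by simpa [hm] using hc
  obtain ⟨k, hk, hk_max⟩ := exists_max_image _ T ⟨m, hm_mem⟩
  refine ⟨T k, ?_, (mem_filter.mp hk).2⟩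
  by_contra! hlt
  -- The next value of `T` above `T k` would be a larger candidate.
  obtain ⟨j, hj, hj_min⟩ :=
    exists_min_image _ T (nonempty_of_sum_ne_zero (hc0.trans_lt hlt).ne')
  have hkj : T k < T j := (mem_filter.mp hj).2
  have htail (i : ι) : T j ≤ T i ↔ T k < T i :=
    ⟨hkj.trans_le, fun hi => hj_min i (mem_filter.mpr ⟨mem_univ i, hi⟩)⟩
  have hj_mem : j ∈ ({k | c ≤ ∑ i with T k ≤ T i, p i} : Finset ι) := by
    simpa only [mem_filter, mem_univ, true_and, htail] using hlt.le
  exact (hk_max j hj_mem).not_gt hkj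

end Quantile

section Duality

variable {ι K : Type*} [Fintype ι]

/-- The polytope of weights in `[0,1]^ι` with total mass `c` with respect to `p`: the feasible
region of the fractional knapsack problem. `Wset p β` is `cappedWeights p (1 - β)`. -/
def cappedWeights [Semiring K] [Preorder K] (p : ι → K) (c : K) : Set (ι → K) :=
  {w | (∀ i, w i ∈ Set.Icc 0 1) ∧ ∑ i, w i * p i = c}

theorem sum_mul_mul_eq_add_sum_mul_sub [CommRing K] (p T w : ι → K) (η : K) :
    ∑ i, T i * w i * p i = (∑ i, w i * p i) * η + ∑ i, p i * (w i * (T i - η)) := by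
  rw [sum_mul, ← sum_add_distrib]
  exact sum_congr rfl fun i _ => by ring

theorem sum_mul_mul_le_of_mem_cappedWeights [CommRing K] [LinearOrder K] [IsOrderedRing K]
    {p w : ι → K} {c : K} (hp : ∀ i, 0 ≤ p i) (hw : w ∈ cappedWeights p c) (T : ι → K) (η : K) :
    ∑ i, T i * w i * p i ≤ c * η + ∑ i, p i * max (T i - η) 0 := by
  obtain ⟨hw01, hwc⟩ := hw
  rw [sum_mul_mul_eq_add_sum_mul_sub p T w η, hwc]
  gcongr with i
  · exact hp i
  · calc w i * (T i - η)
      _ ≤ w i * max (T i - η) 0 := mul_le_mul_of_nonneg_left (le_max_left _ _) (hw01 i).1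
      _ ≤ max (T i - η) 0 := mul_le_of_le_one_left (le_max_right _ _) (hw01 i).2

theorem sum_mul_mul_eq_of_complementary_slackness [CommRing K] [LinearOrder K] [IsOrderedRing K]
    (p : ι → K) {T w : ι → K} {η : K} (hw1 : ∀ i, η < T i → w i = 1)
    (hw0 : ∀ i, T i < η → w i = 0) :
    ∑ i, T i * w i * p i = (∑ i, w i * p i) * η + ∑ i, p i * max (T i - η) 0 := by
  rw [sum_mul_mul_eq_add_sum_mul_sub p T w η]
  congr! 3 with i
  rcases lt_trichotomy (T i) η with h | h | h
  · rw [hw0 i h, zero_mul, max_eq_right (sub_nonpos.mpr h.le)]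
  · rw [h, sub_self, mul_zero, max_self]
  · rw [hw1 i h, one_mul, max_eq_left (sub_nonneg.mpr h.le)]

variable [Field K] [LinearOrder K] [IsStrictOrderedRing K]

theorem exists_mem_cappedWeights_complementary_slackness {p T : ι → K} {c η : K}
    (hlt : ∑ i with η < T i, p i ≤ c) (hle : c ≤ ∑ i with η ≤ T i, p i) :
    ∃ w ∈ cappedWeights p c, (∀ i, η < T i → w i = 1) ∧ ∀ i, T i < η → w i = 0 := by
  obtain ⟨a, b, ha, hb, hab, hc⟩ :
      c ∈ segment K (∑ i with η < T i, p i) (∑ i with η ≤ T i, p i) := by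
    rw [segment_eq_Icc (hlt.trans hle)]
    exact ⟨hlt, hle⟩
  let w (i : ι) : K := (if η < T i then a else 0) + if η ≤ T i then b else 0
  have hw1 (i : ι) (hi : η < T i) : w i = 1 := by simp only [w, if_pos hi, if_pos hi.le, hab]
  have hw0 (i : ι) (hi : T i < η) : w i = 0 := by
    simp only [w, if_neg hi.not_gt, if_neg hi.not_ge, add_zero]
  refine ⟨w, ⟨fun i => ?_, ?_⟩, hw1, hw0⟩
  · constructor
    · positivity
    · calc w i
        _ ≤ a + b := add_le_add (by split_ifs <;> simp only [le_refl, ha])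
          (by split_ifs <;> simp only [le_refl, hb])
        _ = 1 := hab
  · simp only [← hc, w, add_mul, ite_mul, zero_mul, sum_add_distrib, ← sum_filter, mul_sum,
      smul_eq_mul]

theorem exists_isGreatest_isLeast_cappedWeights {p : ι → K} (T : ι → K) {c : K}
    (hp : ∀ i, 0 ≤ p i) (hc0 : 0 ≤ c) (hc : c ≤ ∑ i, p i) :
    ∃ v, IsGreatest ((fun w => ∑ i, T i * w i * p i) '' cappedWeights p c) v ∧
      IsLeast (Set.range fun η => c * η + ∑ i, p i * max (T i - η) 0) v := by
  obtain ⟨η₀, hlt, hle⟩ := exists_sum_filter_lt_le_and_le_sum_filter_le p T hc0 hc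
  obtain ⟨w₀, hw₀, hw1, hw0⟩ := exists_mem_cappedWeights_complementary_slackness hlt hle
  have hattained : ∑ i, T i * w₀ i * p i = c * η₀ + ∑ i, p i * max (T i - η₀) 0 := by
    rw [sum_mul_mul_eq_of_complementary_slackness p hw1 hw0, hw₀.2]
  refine ⟨∑ i, T i * w₀ i * p i, ⟨⟨w₀, hw₀, rfl⟩, ?_⟩, ⟨η₀, hattained.symm⟩, ?_⟩
  · rintro _ ⟨w, hw, rfl⟩
    exact (sum_mul_mul_le_of_mem_cappedWeights hp hw T η₀).trans_eq hattained.symm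
  · rintro _ ⟨η, rfl⟩
    exact sum_mul_mul_le_of_mem_cappedWeights hp hw₀ T η

end Duality

theorem rockafellar_uryasev_discrete_general {ι : Type*} [Fintype ι] {p : ι → ℝ} (T : ι → ℝ)
    {c : ℝ} (hp : ∀ i, 0 ≤ p i) (hc0 : 0 < c) (hc : c ≤ ∑ i, p i) :
    (⨅ η : ℝ, (c * η + ∑ i, p i * max (T i - η) 0)) =
      sSup ((fun w => ∑ i, T i * w i * p i) '' cappedWeights p c) ∧
    (⨅ η : ℝ, (η + (1 / c) * ∑ i, p i * max (T i - η) 0)) =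
      (1 / c) * sSup ((fun w => ∑ i, T i * w i * p i) '' cappedWeights p c) := by
  obtain ⟨v, hsup, hinf⟩ := exists_isGreatest_isLeast_cappedWeights T hp hc0.le hc
  have hduality := hinf.csInf_eq.trans hsup.csSup_eq.symm
  refine ⟨hduality, ?_⟩
  rw [← hduality, ← iInf, Real.mul_iInf_of_nonneg (one_div_pos.mpr hc0).le]
  congr! 2 with η
  field_simp

/-- Rockafellar–Uryasev representation in the discrete setting:
`inf_η ((1−α)·η + Σ_i p_i·max(T_i − η, 0)) = sup{Σ_i T_i w_i p_i : w ∈ W_α}`,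
and equivalently
`inf_η (η + (1/(1−α)) Σ_i p_i·max(T_i − η, 0)) = (1/(1−α))·sup{…}`. -/
theorem rockafellar_uryasev_discrete
    {n : ℕ} (hn : 1 ≤ n) (p T : Fin n → ℝ)
    (hp : ∀ i, 0 < p i) (hsum : ∑ i, p i = 1)
    (α : ℝ) (h0 : 0 ≤ α) (h1 : α < 1) :
    (⨅ η : ℝ, ((1 - α) * η + ∑ i, p i * max (T i - η) 0)) =
      sSup ((fun w => ∑ i, T i * w i * p i) '' Wset p α) ∧
    (⨅ η : ℝ, (η + (1 / (1 - α)) * ∑ i, p i * max (T i - η) 0)) =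
      (1 / (1 - α)) * sSup ((fun w => ∑ i, T i * w i * p i) '' Wset p α) := by
  exact rockafellar_uryasev_discrete_general T (fun i => (hp i).le) (sub_pos.mpr h1)
    (by linarith)
end

section
/- Let 0 ≤ α < γ ≤ 1. Then the dual-based bilinear formulation computes the α–γ expectation: the infimum, over all (s, θ, w') with s ∈ ℝ, θ ∈ ℝ^n satisfying θ_i ≥ 0 and θ_i + s·p_i ≥ T_i·p_i for all i, and w' ∈ W_γ, of the quantity (1/(γ−α)) · ( (1−α)·s + Σ_{i=1}^n θ_i − Σ_{i=1}^n T_i p_i w'_i ), equals E_{α,γ}(μ_T) = (1/(γ−α)) ∫_α^γ F⁻¹(s) ds. -/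
open MeasureTheory

/-! For every real `s`, a `[0, 1]`-valued weight `w` with `∫ w = 1 - β` satisfies
`∫ X w = (1 - β) s + ∫ (X - s) w ≤ (1 - β) s + ∫ (X - s)⁺`, with equality when `w` is `1` where
`X > s` and `0` where `X < s`. The quantile function of `X`, as a random variable on `(0, 1)`, has
the law of `X`, so the right-hand side is the same for both. With the indicator of `(β, 1)` as
weight on `(0, 1)` this identifies `∫_β^1 F⁻¹` as the infimum of the right-hand side over `s`; with
a weight on the original space that splits the mass of the atom at the `β`-quantile it identifies
`∫_β^1 F⁻¹` as the maximum of `∫ X w`. A dual feasible `θ` dominates `(X - s)⁺`, so the bilinear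
program decouples into the infimum at level `α` minus the maximum at level `γ`, which is
`∫_α^γ F⁻¹`. -/

open Set Filter ProbabilityTheory

section Quantile

/-- The generalized inverse of the cumulative distribution function of `μ`. Meaningful for levels
`q ∈ (0, 1)` only: outside, the infimum may be over an empty or an unbounded set. -/
noncomputable def lowerQuantile (μ : Measure ℝ) (q : ℝ) : ℝ :=
  sInf {t | q ≤ cdf μ t}

lemma lowerQuantile_le_iff (μ : Measure ℝ) {q : ℝ} (hq : q ∈ Ioo 0 1) (t : ℝ) :
    lowerQuantile μ q ≤ t ↔ q ≤ cdf μ t := by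
  have hmono := monotone_cdf μ
  have hne : {t | q ≤ cdf μ t}.Nonempty :=
    ((tendsto_cdf_atTop μ).eventually_const_le hq.2).exists
  have hbdd : BddBelow {t | q ≤ cdf μ t} := by
    obtain ⟨m, hm⟩ := ((tendsto_cdf_atBot μ).eventually_lt_const hq.1).exists
    exact ⟨m, fun t ht => (hmono.reflect_lt (hm.trans_le ht)).le⟩
  refine ⟨fun h => ?_, fun h => csInf_le hbdd h⟩
  rw [← StieltjesFunction.iInf_Ioi_eq]
  refine le_ciInf fun r => ?_
  obtain ⟨u, hu, hur⟩ := exists_lt_of_csInf_lt hne (h.trans_lt r.2)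
  exact le_trans hu (hmono hur.le)

lemma monotoneOn_lowerQuantile (μ : Measure ℝ) : MonotoneOn (lowerQuantile μ) (Ioo 0 1) :=
  fun _ hq _ hr hqr =>
    (lowerQuantile_le_iff μ hq _).2 (hqr.trans ((lowerQuantile_le_iff μ hr _).1 le_rfl))

variable (μ : Measure ℝ) [IsProbabilityMeasure μ]

lemma hasLaw_lowerQuantile : HasLaw (lowerQuantile μ) μ (volume.restrict (Ioo 0 1)) := by
  have hmeas : AEMeasurable (lowerQuantile μ) (volume.restrict (Ioo 0 1)) :=
    aemeasurable_restrict_of_monotoneOn measurableSet_Ioo (monotoneOn_lowerQuantile μ)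
  refine ⟨hmeas, Measure.ext_of_Iic _ _ fun t => ?_⟩
  have hpre : lowerQuantile μ ⁻¹' Iic t ∩ Ioo 0 1 = Ioc 0 (cdf μ t) ∩ Ioo 0 1 := by
    ext q
    refine and_congr_left fun hq => ?_
    rw [mem_preimage, mem_Iic, lowerQuantile_le_iff μ hq, mem_Ioc, and_iff_right hq.1]
  rw [Measure.map_apply_of_aemeasurable hmeas measurableSet_Iic,
    Measure.restrict_apply' measurableSet_Ioo, hpre,
    measure_congr ((EventuallyEq.refl _ _).inter Ioo_ae_eq_Ioc),
    inter_eq_left.2 (Ioc_subset_Ioc_right (cdf_le_one μ t)), Real.volume_Ioc, sub_zero, ofReal_cdf]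

lemma measureReal_Iio_lowerQuantile_le {β : ℝ} (hβ : β ∈ Ioo 0 1) :
    μ.real (Iio (lowerQuantile μ β)) ≤ β := by
  have hsub : {q | lowerQuantile μ q < lowerQuantile μ β} ∩ Ioo 0 1 ⊆ Ioo 0 β := fun q hq =>
    ⟨hq.2.1, (monotoneOn_lowerQuantile μ).reflect_lt hq.2 hβ hq.1⟩
  calc μ.real (Iio (lowerQuantile μ β))
      = volume.real ({q | lowerQuantile μ q < lowerQuantile μ β} ∩ Ioo 0 1) := by
        rw [← measureReal_restrict_apply' measurableSet_Ioo,
          (hasLaw_lowerQuantile μ).measureReal_eq measurableSet_Iio]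
        rfl
    _ ≤ volume.real (Ioo 0 β) := measureReal_mono hsub measure_Ioo_lt_top.ne
    _ = β := by simp [hβ.1.le]

lemma le_measureReal_Iic_lowerQuantile {β : ℝ} (hβ : β ∈ Ioo 0 1) :
    β ≤ μ.real (Iic (lowerQuantile μ β)) := by
  rw [← cdf_eq_real]
  exact (lowerQuantile_le_iff μ hβ _).1 le_rfl

end Quantile

section TailWeights

variable {Ω : Type*} {mΩ : MeasurableSpace Ω} {P : Measure Ω} {X w : Ω → ℝ} {β s : ℝ}

/-- The `[0, 1]`-valued weights of total mass `1 - β`; for a finitely supported `P` this is the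
polytope `W_β`. -/
def tailWeights (P : Measure Ω) (β : ℝ) : Set (Ω → ℝ) :=
  {w | AEStronglyMeasurable w P ∧ (∀ᵐ ω ∂P, w ω ∈ Icc 0 1) ∧ ∫ ω, w ω ∂P = 1 - β}

/-- The objective function, in the variable `s`, of the Rockafellar–Uryasev formula for the
upper tail integral at level `β` of the quantile function of `X`. -/
noncomputable def tailBound (P : Measure Ω) (X : Ω → ℝ) (β s : ℝ) : ℝ :=
  (1 - β) * s + ∫ ω, max (X ω - s) 0 ∂P

lemma comp_mem_tailWeights (hX : AEMeasurable X P) {g : ℝ → ℝ}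
    (hg : g ∈ tailWeights (P.map X) β) : g ∘ X ∈ tailWeights P β :=
  ⟨hg.1.comp_aemeasurable hX, ae_of_ae_map hX hg.2.1, (integral_map hX hg.1).symm.trans hg.2.2⟩

lemma indicator_Ioi_mem_tailWeights (hβ : β ∈ Icc 0 1) :
    (Ioi β).indicator 1 ∈ tailWeights (volume.restrict (Ioo (0 : ℝ) 1)) β := by
  refine ⟨(measurable_one.indicator measurableSet_Ioi).aestronglyMeasurable,
    ae_of_all _ fun q => ⟨indicator_nonneg (by simp) q, indicator_le_self' (by simp) q⟩, ?_⟩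
  rw [integral_indicator_one measurableSet_Ioi, measureReal_restrict_apply measurableSet_Ioi,
    Ioi_inter_Ioo, max_eq_left hβ.1, Real.volume_real_Ioo_of_le hβ.2]

lemma exists_mem_tailWeights_eq_indicator (μ : Measure ℝ) [IsProbabilityMeasure μ]
    (hβ : β ∈ Ioo 0 1) :
    ∃ g ∈ tailWeights μ β,
      ∀ x, (lowerQuantile μ β < x → g x = 1) ∧ (x < lowerQuantile μ β → g x = 0) := by
  set s := lowerQuantile μ β
  have hmem : 1 - β ∈ Icc (μ.real (Ioi s)) (μ.real (Ici s)) := by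
    rw [← compl_Iic, ← compl_Iio, probReal_compl_eq_one_sub measurableSet_Iic,
      probReal_compl_eq_one_sub measurableSet_Iio]
    exact ⟨sub_le_sub_left (le_measureReal_Iic_lowerQuantile μ hβ) 1,
      sub_le_sub_left (measureReal_Iio_lowerQuantile_le μ hβ) 1⟩
  obtain ⟨a, b, ha, hb, hab, hβab⟩ := Icc_subset_segment hmem
  have hIoi : Integrable ((Ioi s).indicator (1 : ℝ → ℝ)) μ :=
    (integrable_const 1).indicator measurableSet_Ioi
  have hIci : Integrable ((Ici s).indicator (1 : ℝ → ℝ)) μ :=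
    (integrable_const 1).indicator measurableSet_Ici
  refine ⟨fun x => a * (Ioi s).indicator 1 x + b * (Ici s).indicator 1 x, ⟨?_, ?_, ?_⟩, ?_⟩
  · exact ((hIoi.const_mul a).add (hIci.const_mul b)).aestronglyMeasurable
  · refine ae_of_all _ fun x => ?_
    rcases lt_trichotomy s x with h | rfl | h
    · simp [h, h.le, hab]
    · simpa using ⟨hb, by linarith⟩
    · simp [h, h.le]
  · rw [integral_add (hIoi.const_mul a) (hIci.const_mul b), integral_const_mul, integral_const_mul,
      integral_indicator_one measurableSet_Ioi, integral_indicator_one measurableSet_Ici]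
    exact hβab
  · exact fun x => ⟨fun h => by simp [h, h.le, hab], fun h => by simp [h, h.le]⟩

lemma integrable_mul_of_mem_tailWeights (hX : Integrable X P) (hw : w ∈ tailWeights P β) :
    Integrable (fun ω => X ω * w ω) P :=
  hX.mul_bdd hw.1 (hw.2.1.mono fun _ h => by rw [Real.norm_of_nonneg h.1]; exact h.2)

variable [IsFiniteMeasure P]

lemma integrable_of_mem_tailWeights (hw : w ∈ tailWeights P β) : Integrable w P := by
  simpa using integrable_mul_of_mem_tailWeights (integrable_const 1) hw

lemma integral_mul_eq_add_integral_sub_mul (hX : Integrable X P) (hw : w ∈ tailWeights P β)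
    (s : ℝ) : ∫ ω, X ω * w ω ∂P = (1 - β) * s + ∫ ω, (X ω - s) * w ω ∂P := by
  simp_rw [sub_mul]
  rw [integral_sub (integrable_mul_of_mem_tailWeights hX hw)
    ((integrable_of_mem_tailWeights hw).const_mul s), integral_const_mul, hw.2.2]
  ring

lemma integral_mul_le_tailBound (hX : Integrable X P) (hw : w ∈ tailWeights P β) (s : ℝ) :
    ∫ ω, X ω * w ω ∂P ≤ tailBound P X β s := by
  have hXs : Integrable (fun ω => X ω - s) P := hX.sub (integrable_const s)
  rw [integral_mul_eq_add_integral_sub_mul hX hw s, tailBound]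
  refine add_le_add_right (integral_mono_ae (integrable_mul_of_mem_tailWeights hXs hw)
    hXs.pos_part (hw.2.1.mono fun ω h => ?_)) _
  calc (X ω - s) * w ω ≤ max (X ω - s) 0 * w ω :=
        mul_le_mul_of_nonneg_right (le_max_left _ _) h.1
    _ ≤ max (X ω - s) 0 := mul_le_of_le_one_right (le_max_right _ _) h.2

lemma integral_mul_eq_tailBound (hX : Integrable X P) (hw : w ∈ tailWeights P β)
    (hws : ∀ᵐ ω ∂P, (s < X ω → w ω = 1) ∧ (X ω < s → w ω = 0)) :
    ∫ ω, X ω * w ω ∂P = tailBound P X β s := by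
  rw [integral_mul_eq_add_integral_sub_mul hX hw s, tailBound]
  refine congrArg _ (integral_congr_ae (hws.mono fun ω h => ?_))
  rcases lt_trichotomy s (X ω) with hs | hs | hs
  · simp [h.1 hs, hs.le]
  · simp [← hs]
  · simp [h.2 hs, hs.le]

end TailWeights

section TailIntegral

variable {Ω : Type*} {mΩ : MeasurableSpace Ω} {P : Measure Ω} [IsProbabilityMeasure P]
  {X : Ω → ℝ} {β : ℝ}

lemma identDistrib_lowerQuantile_map (hX : AEMeasurable X P) :
    IdentDistrib (lowerQuantile (P.map X)) X (volume.restrict (Ioo 0 1)) P :=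
  have := Measure.isProbabilityMeasure_map hX
  (hasLaw_lowerQuantile (P.map X)).identDistrib ⟨hX, rfl⟩

lemma integrableOn_lowerQuantile_map (hX : Integrable X P) :
    IntegrableOn (lowerQuantile (P.map X)) (Icc 0 1) :=
  (integrableOn_Icc_iff_integrableOn_Ioo (by simp) (by simp)).2
    ((identDistrib_lowerQuantile_map hX.aemeasurable).integrable_iff.2 hX)

lemma tailBound_lowerQuantile_map (hX : AEMeasurable X P) (β s : ℝ) :
    tailBound (volume.restrict (Ioo 0 1)) (lowerQuantile (P.map X)) β s = tailBound P X β s := by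
  have hmeas : Measurable fun x : ℝ => max (x - s) 0 := by fun_prop
  exact congrArg _ ((identDistrib_lowerQuantile_map hX).comp hmeas).integral_eq

lemma intervalIntegral_eq_integral_mul_indicator_Ioi (f : ℝ → ℝ) (hβ : β ∈ Icc 0 1) :
    ∫ q in β..1, f q = ∫ q in Ioo 0 1, f q * (Ioi β).indicator 1 q := by
  simp_rw [← indicator_mul_right, Pi.one_apply, mul_one]
  rw [setIntegral_indicator measurableSet_Ioi, Ioo_inter_Ioi, max_eq_right hβ.1,
    intervalIntegral.integral_of_le hβ.2, integral_Ioc_eq_integral_Ioo]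

lemma integral_lowerQuantile_le_tailBound (hX : Integrable X P) (hβ : β ∈ Icc 0 1) (s : ℝ) :
    ∫ q in β..1, lowerQuantile (P.map X) q ≤ tailBound P X β s := by
  rw [intervalIntegral_eq_integral_mul_indicator_Ioi _ hβ,
    ← tailBound_lowerQuantile_map hX.aemeasurable]
  exact integral_mul_le_tailBound
    ((identDistrib_lowerQuantile_map hX.aemeasurable).integrable_iff.2 hX)
    (indicator_Ioi_mem_tailWeights hβ) s

lemma integral_lowerQuantile_eq_tailBound (hX : Integrable X P) (hβ : β ∈ Ioo 0 1) :
    ∫ q in β..1, lowerQuantile (P.map X) q =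
      tailBound P X β (lowerQuantile (P.map X) β) := by
  rw [intervalIntegral_eq_integral_mul_indicator_Ioi _ (Ioo_subset_Icc_self hβ),
    ← tailBound_lowerQuantile_map hX.aemeasurable]
  refine integral_mul_eq_tailBound
    ((identDistrib_lowerQuantile_map hX.aemeasurable).integrable_iff.2 hX)
    (indicator_Ioi_mem_tailWeights (Ioo_subset_Icc_self hβ)) ?_
  filter_upwards [ae_restrict_mem measurableSet_Ioo] with q hq
  have hmono := monotoneOn_lowerQuantile (P.map X)
  exact ⟨fun h => indicator_of_mem (hmono.reflect_lt hβ hq h) _,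
    fun h => indicator_of_notMem (hmono.reflect_lt hq hβ h).not_gt _⟩

lemma tailBound_lowerQuantile_le (hX : Integrable X P) {b : ℝ} (hb : b ∈ Ioo 0 1)
    (hβb : b ∈ uIcc β (1 / 2)) :
    tailBound P X β (lowerQuantile (P.map X) b) ≤
      (∫ q in b..1, lowerQuantile (P.map X) q) + (b - β) * lowerQuantile (P.map X) (1 / 2) := by
  have hmono := monotoneOn_lowerQuantile (P.map X)
  have hhalf : (1 / 2 : ℝ) ∈ Ioo 0 1 := by norm_num
  have hmul : (b - β) * lowerQuantile (P.map X) b ≤ (b - β) * lowerQuantile (P.map X) (1 / 2) := by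
    rcases mem_uIcc.1 hβb with ⟨h, h'⟩ | ⟨h, h'⟩
    · exact mul_le_mul_of_nonneg_left (hmono hb hhalf h') (sub_nonneg.2 h)
    · exact mul_le_mul_of_nonpos_left (hmono hhalf hb h) (sub_nonpos.2 h')
  rw [integral_lowerQuantile_eq_tailBound hX hb]
  simp only [tailBound]
  linarith

-- The bound need not be attained at `β = 0` or `β = 1`, so `β` is approached from inside `(0, 1)`.
lemma isGLB_range_tailBound (hX : Integrable X P) (hβ : β ∈ Icc 0 1) :
    IsGLB (range (tailBound P X β)) (∫ q in β..1, lowerQuantile (P.map X) q) := by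
  refine ⟨forall_mem_range.2 (integral_lowerQuantile_le_tailBound hX hβ), fun L hL => ?_⟩
  have hIoo : openSegment ℝ β (1 / 2) ⊆ Ioo 0 1 := by
    rw [← interior_Icc]
    exact (convex_Icc 0 1).openSegment_self_interior_subset_interior hβ
      (by rw [interior_Icc]; norm_num)
  have hclosure : β ∈ closure (openSegment ℝ β (1 / 2)) := by
    rw [closure_openSegment]
    exact left_mem_segment ℝ _ _
  have hcont : ContinuousOn (fun b => (∫ q in b..1, lowerQuantile (P.map X) q) +
      (b - β) * lowerQuantile (P.map X) (1 / 2)) (Icc 0 1) := by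
    have hint := integrableOn_lowerQuantile_map hX
    rw [← uIcc_of_le zero_le_one] at hint ⊢
    exact (intervalIntegral.continuousOn_primitive_interval_left hint).add (by fun_prop)
  have hle := ContinuousWithinAt.closure_le hclosure continuousWithinAt_const
    ((hcont β hβ).mono (hIoo.trans Ioo_subset_Icc_self)) fun b hb =>
      (hL ⟨_, rfl⟩).trans (tailBound_lowerQuantile_le hX (hIoo hb)
        (segment_eq_uIcc β (1 / 2) ▸ openSegment_subset_segment ℝ _ _ hb))
  simpa using hle

lemma exists_mem_tailWeights_integral_mul_eq (hX : Integrable X P) (hβ : β ∈ Icc 0 1) :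
    ∃ w ∈ tailWeights P β, ∫ ω, X ω * w ω ∂P = ∫ q in β..1, lowerQuantile (P.map X) q := by
  rcases hβ.1.eq_or_lt with rfl | h0
  · refine ⟨1, ⟨aestronglyMeasurable_one, by simp, by simp⟩, ?_⟩
    rw [intervalIntegral.integral_of_le zero_le_one, integral_Ioc_eq_integral_Ioo,
      (identDistrib_lowerQuantile_map hX.aemeasurable).integral_eq]
    simp
  rcases hβ.2.eq_or_lt with rfl | h1
  · exact ⟨0, ⟨aestronglyMeasurable_zero, by simp, by simp⟩, by simp⟩
  have hβ' : β ∈ Ioo 0 1 := ⟨h0, h1⟩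
  have := Measure.isProbabilityMeasure_map hX.aemeasurable
  obtain ⟨g, hg, hg_eq⟩ := exists_mem_tailWeights_eq_indicator (P.map X) hβ'
  have hw := comp_mem_tailWeights hX.aemeasurable hg
  refine ⟨g ∘ X, hw, ?_⟩
  rw [integral_lowerQuantile_eq_tailBound hX hβ']
  exact integral_mul_eq_tailBound hX hw (ae_of_all _ fun ω => hg_eq (X ω))

lemma isGreatest_integral_mul_tailWeights (hX : Integrable X P) (hβ : β ∈ Icc 0 1) :
    IsGreatest ((fun w => ∫ ω, X ω * w ω ∂P) '' tailWeights P β)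
      (∫ q in β..1, lowerQuantile (P.map X) q) := by
  refine ⟨exists_mem_tailWeights_integral_mul_eq hX hβ, forall_mem_image.2 fun w hw => ?_⟩
  exact (isGLB_range_tailBound hX hβ).2 (forall_mem_range.2 (integral_mul_le_tailBound hX hw))

lemma integral_lowerQuantile_sub (hX : Integrable X P) {α γ : ℝ} (hα : α ∈ Icc 0 1)
    (hγ : γ ∈ Icc 0 1) :
    (∫ q in α..1, lowerQuantile (P.map X) q) - ∫ q in γ..1, lowerQuantile (P.map X) q =
      ∫ q in α..γ, lowerQuantile (P.map X) q := by
  have hint {a b : ℝ} (ha : a ∈ Icc 0 1) (hb : b ∈ Icc 0 1) :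
      IntervalIntegrable (lowerQuantile (P.map X)) volume a b :=
    ((integrableOn_lowerQuantile_map hX).mono_set (uIcc_subset_Icc ha hb)).intervalIntegrable
  have h1 : (1 : ℝ) ∈ Icc 0 1 := right_mem_Icc.2 zero_le_one
  exact sub_eq_of_eq_add
    (intervalIntegral.integral_add_adjacent_intervals (hint hα hγ) (hint hγ h1)).symm

end TailIntegral

section BilinearDual

variable {Ω : Type*} {mΩ : MeasurableSpace Ω} {P : Measure Ω} {X θ : Ω → ℝ} {s : ℝ}

/-- The values of the bilinear objective: the pair `(s, θ)` is feasible for the dual of the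
maximization of `∫ X w` over `w ∈ tailWeights P α`, and `w ∈ tailWeights P γ`. -/
def dualBilinearValues (P : Measure Ω) (X : Ω → ℝ) (α γ : ℝ) : Set ℝ :=
  {v | ∃ (s : ℝ) (θ w : Ω → ℝ),
    (Integrable θ P ∧ ∀ᵐ ω ∂P, 0 ≤ θ ω ∧ X ω ≤ θ ω + s) ∧
    w ∈ tailWeights P γ ∧
    v = (1 / (γ - α)) * ((1 - α) * s + ∫ ω, θ ω ∂P - ∫ ω, X ω * w ω ∂P)}

lemma tailBound_le_of_dual_feasible (hθ : Integrable θ P)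
    (hfeas : ∀ᵐ ω ∂P, 0 ≤ θ ω ∧ X ω ≤ θ ω + s) (β : ℝ) :
    tailBound P X β s ≤ (1 - β) * s + ∫ ω, θ ω ∂P :=
  add_le_add_right (integral_mono_of_nonneg (ae_of_all _ fun _ => le_max_right _ _) hθ
    (hfeas.mono fun _ h => max_le (sub_le_iff_le_add.2 h.2) h.1)) _

lemma tailBound_sub_mem_dualBilinearValues [IsFiniteMeasure P] (hX : Integrable X P) {γ : ℝ}
    {w : Ω → ℝ} (hw : w ∈ tailWeights P γ) (α s : ℝ) :
    (1 / (γ - α)) * (tailBound P X α s - ∫ ω, X ω * w ω ∂P) ∈ dualBilinearValues P X α γ :=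
  ⟨s, fun ω => max (X ω - s) 0, w,
    ⟨(hX.sub (integrable_const s)).pos_part,
      ae_of_all _ fun _ => ⟨le_max_right _ _, sub_le_iff_le_add.1 (le_max_left _ _)⟩⟩,
    hw, rfl⟩

theorem dual_bilinear_formulation_eq_alpha_gamma_expectation_general [IsProbabilityMeasure P]
    (hX : Integrable X P) {α γ : ℝ} (h0 : 0 ≤ α) (h1 : α < γ) (h2 : γ ≤ 1) :
    IsGLB (dualBilinearValues P X α γ)
      ((1 / (γ - α)) * ∫ q in α..γ, lowerQuantile (P.map X) q) := by
  have hα : α ∈ Icc 0 1 := ⟨h0, h1.le.trans h2⟩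
  have hγ : γ ∈ Icc 0 1 := ⟨h0.trans h1.le, h2⟩
  have hc : 0 < 1 / (γ - α) := one_div_pos.2 (sub_pos.2 h1)
  have hglb := isGLB_range_tailBound hX hα
  obtain ⟨⟨w', hw', hmax⟩, hle⟩ := isGreatest_integral_mul_tailWeights hX hγ
  rw [← integral_lowerQuantile_sub hX hα hγ]
  refine ⟨?_, fun L hL => ?_⟩
  · rintro _ ⟨s, θ, w, ⟨hθ, hfeas⟩, hw, rfl⟩
    exact mul_le_mul_of_nonneg_left (sub_le_sub ((hglb.1 ⟨s, rfl⟩).trans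
      (tailBound_le_of_dual_feasible hθ hfeas α)) (hle ⟨w, hw, rfl⟩)) hc.le
  · rw [← div_le_iff₀' hc, le_sub_iff_add_le]
    refine hglb.2 (forall_mem_range.2 fun s => ?_)
    rw [← le_sub_iff_add_le, div_le_iff₀' hc, ← hmax]
    exact hL (tailBound_sub_mem_dualBilinearValues hX hw' α s)

end BilinearDual

section FiniteDistribution

variable {ι : Type*} [Fintype ι] [MeasurableSpace ι] {p : ι → ℝ}

/-- The measure on the index set with weights `p`, under which `T : ι → ℝ` is a random variable. -/
noncomputable def weightMeasure (p : ι → ℝ) : Measure ι :=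
  ∑ i, ENNReal.ofReal (p i) • Measure.dirac i

instance isFiniteMeasure_weightMeasure : IsFiniteMeasure (weightMeasure p) :=
  ⟨by simp [weightMeasure, Measure.finsetSum_apply, ENNReal.ofReal_lt_top]⟩

lemma isProbabilityMeasure_weightMeasure (hp : p ∈ stdSimplex ℝ ι) :
    IsProbabilityMeasure (weightMeasure p) :=
  ⟨by simp [weightMeasure, Measure.finsetSum_apply,
    ← ENNReal.ofReal_sum_of_nonneg fun i _ => hp.1 i, hp.2]⟩

lemma map_weightMeasure {n : ℕ} (p T : Fin n → ℝ) : (weightMeasure p).map T = muT p T := by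
  simp [weightMeasure, muT, Measure.map_finset_sum .of_discrete, Measure.map_dirac]

variable [MeasurableSingletonClass ι]

lemma integral_weightMeasure (hp : ∀ i, 0 ≤ p i) (f : ι → ℝ) :
    ∫ i, f i ∂weightMeasure p = ∑ i, p i * f i := by
  rw [weightMeasure, integral_finsetSum_measure fun _ _ =>
    (integrable_dirac (by simp)).smul_measure ENNReal.ofReal_ne_top]
  simp [hp]

lemma ae_weightMeasure_iff (hp : ∀ i, 0 < p i) {q : ι → Prop} :
    (∀ᵐ i ∂weightMeasure p, q i) ↔ ∀ i, q i := by
  simp [weightMeasure, hp]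

lemma tailWeights_weightMeasure {n : ℕ} {p : Fin n → ℝ} (hp : ∀ i, 0 < p i) (β : ℝ) :
    tailWeights (weightMeasure p) β = Wset p β := by
  ext w
  simp [tailWeights, Wset, ae_weightMeasure_iff hp, integral_weightMeasure fun i => (hp i).le,
    mul_comm, AEStronglyMeasurable.of_discrete]

lemma dual_feasible_weightMeasure_iff (hp : ∀ i, 0 < p i) {T θ : ι → ℝ} {s : ℝ} :
    (∀ᵐ i ∂weightMeasure p, 0 ≤ θ i ∧ T i ≤ θ i + s) ↔
      ∀ i, 0 ≤ p i * θ i ∧ T i * p i ≤ p i * θ i + s * p i := by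
  refine (ae_weightMeasure_iff hp).trans (forall_congr' fun i => and_congr ?_ ?_)
  · rw [mul_nonneg_iff_of_pos_left (hp i)]
  · rw [mul_comm (p i), ← add_mul, mul_le_mul_iff_left₀ (hp i)]

-- The dual variable of the finite program is `p i` times the density `θ i`.
lemma dualBilinearValues_weightMeasure {n : ℕ} {p : Fin n → ℝ} (hp : ∀ i, 0 < p i)
    (T : Fin n → ℝ) (α γ : ℝ) :
    dualBilinearValues (weightMeasure p) T α γ =
      {v : ℝ | ∃ (s : ℝ) (θ : Fin n → ℝ) (w' : Fin n → ℝ),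
        (∀ i, 0 ≤ θ i ∧ T i * p i ≤ θ i + s * p i) ∧
        w' ∈ Wset p γ ∧
        v = (1 / (γ - α)) * ((1 - α) * s + ∑ i, θ i - ∑ i, T i * p i * w' i)} := by
  have hint (f : Fin n → ℝ) := integral_weightMeasure (fun i => (hp i).le) f
  have hmul (w : Fin n → ℝ) : ∑ i, p i * (T i * w i) = ∑ i, T i * p i * w i :=
    Finset.sum_congr rfl fun i _ => by ring
  have hdiv (θ : Fin n → ℝ) (i : Fin n) : p i * (θ i / p i) = θ i :=
    mul_div_cancel₀ _ (hp i).ne'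
  ext v
  simp only [dualBilinearValues, tailWeights_weightMeasure hp, hint, hmul,
    dual_feasible_weightMeasure_iff hp, mem_ofPred_eq]
  constructor
  · rintro ⟨s, θ, w, ⟨-, hfeas⟩, hw, rfl⟩
    exact ⟨s, fun i => p i * θ i, w, hfeas, hw, rfl⟩
  · rintro ⟨s, θ, w, hfeas, hw, rfl⟩
    exact ⟨s, fun i => θ i / p i, w, ⟨.of_finite, by simpa only [hdiv] using hfeas⟩, hw,
      by simp only [hdiv]⟩

lemma lowerQuantile_muT {n : ℕ} {p : Fin n → ℝ} (hp : p ∈ stdSimplex ℝ (Fin n)) (T : Fin n → ℝ) :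
    lowerQuantile (muT p T) = dFinv p T := by
  have := isProbabilityMeasure_weightMeasure hp
  have : IsProbabilityMeasure (muT p T) :=
    map_weightMeasure p T ▸ Measure.isProbabilityMeasure_map .of_discrete
  ext q
  simp only [lowerQuantile, dFinv, cdf_eq_real, measureReal_def]

end FiniteDistribution

/-- The dual-based bilinear formulation computes the α–γ expectation: the
infimum over all `(s, θ, w')` with `θ_i ≥ 0`, `θ_i + s·p_i ≥ T_i·p_i` and
`w' ∈ W_γ` of `(1/(γ−α))·((1−α)s + Σ_i θ_i − Σ_i T_i p_i w'_i)` equals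
`E_{α,γ}(μ_T)`. -/
theorem dual_bilinear_formulation_eq_alpha_gamma_expectation
    {n : ℕ} (hn : 1 ≤ n) (p T : Fin n → ℝ)
    (hp : ∀ i, 0 < p i) (hsum : ∑ i, p i = 1)
    (α γ : ℝ) (h0 : 0 ≤ α) (h1 : α < γ) (h2 : γ ≤ 1) :
    sInf {v : ℝ | ∃ (s : ℝ) (θ : Fin n → ℝ) (w' : Fin n → ℝ),
        (∀ i, 0 ≤ θ i ∧ T i * p i ≤ θ i + s * p i) ∧
        w' ∈ Wset p γ ∧
        v = (1 / (γ - α)) *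
          ((1 - α) * s + ∑ i, θ i - ∑ i, T i * p i * w' i)} =
      dEag p T α γ := by
  have hp' : p ∈ stdSimplex ℝ (Fin n) := ⟨fun i => (hp i).le, hsum⟩
  have := isProbabilityMeasure_weightMeasure hp'
  have hglb := dual_bilinear_formulation_eq_alpha_gamma_expectation_general
    (Integrable.of_finite (μ := weightMeasure p) (f := T)) h0 h1 h2
  rw [← dualBilinearValues_weightMeasure hp, hglb.csInf_eq hglb.nonempty, map_weightMeasure,
    lowerQuantile_muT hp', dEag]
end

section
/- Let μ be a finitely supported probability measure on ℝ whose support is contained in [0,∞), and let J(t) = ∫_0^t F(u) du (with the convention J(t) = −∫_t^0 F(u) du for t < 0). Then for every p ∈ [0,1], the integrated quantile function is the Legendre transform of the integrated distribution function: sup_{t ∈ ℝ} ( t·p − J(t) ) = ∫_0^p F⁻¹(s) ds. -/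
open MeasureTheory

/-!
The quantile function `Q = Finv μ` satisfies `Q s ≤ t ↔ s ≤ F t`, so it pushes Lebesgue measure on
`(0, 1)` forward to `μ`. Fubini gives `J t = ∫ (t - x)⁺ dμ - ∫ (-x)⁺ dμ`, and the pushforward turns
`∫ (t - x)⁺ dμ` into `∫₀¹ (t - Q)⁺`. Since `(Q - t) + (t - Q)⁺ = (Q - t)⁺`, splitting the integral
at `p` yields
`∫₀ᵖ Q - (t p - ∫ (t - x)⁺ dμ) = ∫₀ᵖ (Q - t)⁺ + ∫ₚ¹ (t - Q)⁺ ≥ 0`.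
For `0 < p < 1` the gap vanishes at `t = Q p` by monotonicity of `Q`; for `p = 0` and `p = 1` the
supremum need not be attained, but the gap tends to `0` as `t → -∞` and `t → ∞` respectively.
-/

section Quantile

open ProbabilityTheory Set Filter Topology

lemma integral_indicator_Ici_one (a b x : ℝ) :
    ∫ u in a..b, (Ici x).indicator 1 u = max (b - x) 0 - max (a - x) 0 := by
  have hint : IntervalIntegrable ((Ici x).indicator (1 : ℝ → ℝ)) volume a b := by
    rw [intervalIntegrable_iff]
    exact (integrableOn_const (by simp [uIoc])).indicator measurableSet_Ici
  refine integral_eq_of_hasDerivAt_off_countable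
    (fun u => max (u - x) 0) _ (countable_singleton x) (by fun_prop) ?_ hint
  rintro u ⟨-, hux⟩
  rcases lt_or_gt_of_ne hux with h | h
  · rw [indicator_of_notMem (notMem_Ici.2 h)]
    refine (hasDerivAt_const u (0 : ℝ)).congr_of_eventuallyEq ?_
    filter_upwards [Iio_mem_nhds h] with v hv
    exact max_eq_right (sub_nonpos.2 (le_of_lt hv))
  · rw [indicator_of_mem (mem_Ici.2 h.le)]
    refine ((hasDerivAt_id u).sub_const x).congr_of_eventuallyEq ?_
    filter_upwards [Ioi_mem_nhds h] with v hv
    exact max_eq_left (sub_nonneg.2 (le_of_lt hv))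

lemma tendsto_integral_max_sub_atTop {α : Type*} [MeasurableSpace α] {ν : Measure α} {f : α → ℝ}
    (hf : Integrable (fun a => max (f a) 0) ν) :
    Tendsto (fun t : ℝ => ∫ a, max (f a - t) 0 ∂ν) atTop (𝓝 0) := by
  suffices Tendsto (fun t : ℝ => ∫ a, max (f a - t) 0 ∂ν) atTop (𝓝 (∫ _, 0 ∂ν)) by
    simpa only [integral_zero] using this
  refine tendsto_integral_filter_of_dominated_convergence (fun a => max (f a) 0) ?_ ?_ hf ?_
  · filter_upwards [eventually_ge_atTop 0] with t ht
    have hmax (a : α) : max (max (f a) 0 - t) 0 = max (f a - t) 0 := by grind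
    refine AEStronglyMeasurable.congr ?_ (ae_of_all _ hmax)
    exact (hf.aestronglyMeasurable.sub aestronglyMeasurable_const).sup aestronglyMeasurable_const
  · filter_upwards [eventually_ge_atTop 0] with t ht
    refine ae_of_all _ fun a => ?_
    rw [Real.norm_of_nonneg (le_max_right _ _)]
    exact max_le_max_right 0 (sub_le_self _ ht)
  · refine ae_of_all _ fun a => tendsto_const_nhds.congr' ?_
    filter_upwards [eventually_ge_atTop (f a)] with t ht
    exact (max_eq_right (sub_nonpos.2 ht)).symm

lemma integrable_max_const_sub {μ : Measure ℝ} [IsFiniteMeasure μ]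
    (hneg : Integrable (fun x => max (-x) 0) μ) (t : ℝ) :
    Integrable (fun x => max (t - x) 0) μ := by
  refine (hneg.add (integrable_const |t|)).mono' (by fun_prop) (ae_of_all _ fun x => ?_)
  rw [Real.norm_of_nonneg (le_max_right _ _), Pi.add_apply]
  grind

lemma integral_max_neg_eq_zero {μ : Measure ℝ} (hsupp : μ (Iio 0) = 0) :
    ∫ x, max (-x) 0 ∂μ = 0 := by
  refine integral_eq_zero_of_ae ?_
  filter_upwards [measure_eq_zero_iff_ae_notMem.1 hsupp] with x hx
  exact max_eq_right (neg_nonpos.2 (not_lt.1 hx))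

lemma integrable_of_measure_compl_finset_eq_zero {α E : Type*} [MeasurableSpace α]
    [MeasurableSingletonClass α] [NormedAddCommGroup E] {ν : Measure α} [IsFiniteMeasure ν]
    {s : Finset α} (hs : ν (↑s)ᶜ = 0) (f : α → E) : Integrable f ν := by
  rw [← Measure.restrict_eq_self_of_ae_mem hs]
  exact IntegrableOn.finset

variable {μ : Measure ℝ} [IsProbabilityMeasure μ] {p q : ℝ}

lemma integral_cdf (a b : ℝ) :
    ∫ u in a..b, cdf μ u = ∫ x, (max (b - x) 0 - max (a - x) 0) ∂μ := by
  have hint : Integrable (Function.uncurry fun u x : ℝ => (Ici x).indicator (1 : ℝ → ℝ) u)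
      ((volume.restrict (uIoc a b)).prod μ) := by
    have : IsFiniteMeasure (volume.restrict (uIoc a b)) := ⟨by simp [uIoc]⟩
    exact (integrable_const 1).indicator (measurableSet_le measurable_snd measurable_fst)
  calc ∫ u in a..b, cdf μ u
      = ∫ u in a..b, ∫ x, (Ici x).indicator 1 u ∂μ := by
        refine intervalIntegral.integral_congr fun u _ => ?_
        exact (cdf_eq_real μ u).trans (integral_indicator_one measurableSet_Iic).symm
    _ = ∫ x, (∫ u in a..b, (Ici x).indicator 1 u) ∂μ := intervalIntegral_integral_swap hint
    _ = ∫ x, (max (b - x) 0 - max (a - x) 0) ∂μ := by simp only [integral_indicator_Ici_one]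

lemma integral_cdf_eq_sub (hneg : Integrable (fun x => max (-x) 0) μ) (t : ℝ) :
    ∫ u in (0 : ℝ)..t, cdf μ u = ∫ x, max (t - x) 0 ∂μ - ∫ x, max (-x) 0 ∂μ := by
  simp only [integral_cdf, zero_sub]
  exact integral_sub (integrable_max_const_sub hneg t) hneg

lemma isLeast_Finv (hq : q ∈ Ioo (0 : ℝ) 1) : IsLeast {t | q ≤ cdf μ t} (Finv μ q) := by
  have hFinv : Finv μ q = sInf {t | q ≤ cdf μ t} := by
    simp only [Finv, cdf_eq_real, Measure.real]
  rw [hFinv]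
  have hne : {t | q ≤ cdf μ t}.Nonempty :=
    ((tendsto_cdf_atTop μ).eventually_const_le hq.2).exists
  obtain ⟨m, hm⟩ := ((tendsto_cdf_atBot μ).eventually_lt_const hq.1).exists
  have hbdd : BddBelow {t | q ≤ cdf μ t} :=
    ⟨m, fun t ht => ((monotone_cdf μ).reflect_lt (hm.trans_le ht)).le⟩
  refine ⟨?_, fun t ht => csInf_le hbdd ht⟩
  rw [mem_ofPred_eq, ← (cdf μ).iInf_Ioi_eq]
  refine le_ciInf fun ⟨u, hu⟩ => ?_
  obtain ⟨v, hv, hvu⟩ := exists_lt_of_csInf_lt hne hu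
  exact le_trans hv (monotone_cdf μ hvu.le)

lemma Finv_le_iff {t : ℝ} (hq : q ∈ Ioo (0 : ℝ) 1) : Finv μ q ≤ t ↔ q ≤ cdf μ t :=
  ⟨fun h => (isLeast_Finv hq).1.trans (monotone_cdf μ h), fun h => (isLeast_Finv hq).2 h⟩

lemma monotoneOn_Finv_s19 : MonotoneOn (Finv μ) (Ioo 0 1) := fun _ ha _ hb hab =>
  (Finv_le_iff ha).2 (hab.trans (isLeast_Finv hb).1)

lemma aemeasurable_Finv : AEMeasurable (Finv μ) (volume.restrict (Ioo 0 1)) :=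
  aemeasurable_restrict_of_monotoneOn measurableSet_Ioo monotoneOn_Finv_s19

lemma map_Finv_volume : (volume.restrict (Ioo 0 1)).map (Finv μ) = μ := by
  have : IsProbabilityMeasure (volume.restrict (Ioo (0 : ℝ) 1)) := ⟨by simp⟩
  have := Measure.isProbabilityMeasure_map (aemeasurable_Finv (μ := μ))
  refine Measure.ext_of_Iic _ _ fun t => ?_
  rw [Measure.map_apply_of_aemeasurable aemeasurable_Finv measurableSet_Iic, ← ofReal_cdf]
  calc volume.restrict (Ioo 0 1) (Finv μ ⁻¹' Iic t)
      = volume.restrict (Ioo 0 1) (Iic (cdf μ t)) := by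
        refine measure_congr ?_
        filter_upwards [ae_restrict_mem measurableSet_Ioo] with s hs
        exact propext (Finv_le_iff hs)
    _ = volume (Ioc 0 (cdf μ t)) := by
        rw [restrict_Ioo_eq_restrict_Ioc, Measure.restrict_apply measurableSet_Iic]
        congr 1
        ext s
        have := cdf_le_one μ t
        grind
    _ = ENNReal.ofReal (cdf μ t) := by rw [Real.volume_Ioc, sub_zero]

lemma integral_comp_Finv {g : ℝ → ℝ} (hg : AEStronglyMeasurable g μ) :
    ∫ s in (0 : ℝ)..1, g (Finv μ s) = ∫ x, g x ∂μ := by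
  rw [intervalIntegral.integral_of_le zero_le_one, integral_Ioc_eq_integral_Ioo]
  conv_rhs => rw [← map_Finv_volume (μ := μ)]
  exact (integral_map aemeasurable_Finv (by rwa [map_Finv_volume])).symm

lemma intervalIntegrable_comp_Finv {g : ℝ → ℝ} (hg : Integrable g μ) :
    IntervalIntegrable (fun s => g (Finv μ s)) volume 0 1 := by
  rw [intervalIntegrable_iff_integrableOn_Ioo_of_le zero_le_one]
  rw [← map_Finv_volume (μ := μ)] at hg
  exact hg.comp_aemeasurable aemeasurable_Finv

lemma intervalIntegrable_Finv (hneg : Integrable (fun x => max (-x) 0) μ) (hp : p ∈ Icc (0 : ℝ) 1)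
    (hpos : p = 1 → Integrable (fun x => max x 0) μ) :
    IntervalIntegrable (Finv μ) volume 0 p := by
  rcases hp.1.eq_or_lt with rfl | hp0
  · exact IntervalIntegrable.refl
  rcases hp.2.eq_or_lt with rfl | hp1
  · refine intervalIntegrable_comp_Finv (g := fun x => x) ?_
    exact ((hpos rfl).sub hneg).congr (ae_of_all _ fun x =>
      max_zero_sub_max_neg_zero_eq_self x)
  have hbound : IntegrableOn (fun s => |Finv μ p| + max (-Finv μ s) 0) (Ioo 0 p) := by
    rw [← intervalIntegrable_iff_integrableOn_Ioo_of_le hp.1]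
    refine intervalIntegrable_const.add ((intervalIntegrable_comp_Finv hneg).mono_set ?_)
    rw [uIcc_of_le hp.1, uIcc_of_le zero_le_one]
    exact Icc_subset_Icc_right hp.2
  rw [intervalIntegrable_iff_integrableOn_Ioo_of_le hp.1]
  refine Integrable.mono' hbound
    (aemeasurable_Finv.mono_set (Ioo_subset_Ioo_right hp.2)).aestronglyMeasurable ?_
  filter_upwards [ae_restrict_mem measurableSet_Ioo] with s hs
  have hsp : Finv μ s ≤ Finv μ p :=
    monotoneOn_Finv_s19 ⟨hs.1, hs.2.trans hp1⟩ ⟨hp0, hp1⟩ hs.2.le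
  rw [Real.norm_eq_abs]
  grind

lemma integral_Finv_sub_eq (hneg : Integrable (fun x => max (-x) 0) μ) (hp : p ∈ Icc (0 : ℝ) 1)
    (hQ : IntervalIntegrable (Finv μ) volume 0 p) (t : ℝ) :
    (∫ s in (0 : ℝ)..p, Finv μ s) - (t * p - ∫ x, max (t - x) 0 ∂μ) =
      (∫ s in (0 : ℝ)..p, max (Finv μ s - t) 0) + ∫ s in p..1, max (t - Finv μ s) 0 := by
  have hint : IntervalIntegrable (fun s => max (t - Finv μ s) 0) volume 0 1 :=
    intervalIntegrable_comp_Finv (integrable_max_const_sub hneg t)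
  have hp' : p ∈ uIcc (0 : ℝ) 1 := by rwa [uIcc_of_le zero_le_one]
  have hint₁ := hint.mono_set (uIcc_subset_uIcc_left hp')
  have hint₂ := hint.mono_set (uIcc_subset_uIcc_right hp')
  have hpoint (s : ℝ) :
      max (Finv μ s - t) 0 = Finv μ s - t + max (t - Finv μ s) 0 := by grind
  have hleft : ∫ s in (0 : ℝ)..p, max (Finv μ s - t) 0 =
      (∫ s in (0 : ℝ)..p, Finv μ s) - t * p + ∫ s in (0 : ℝ)..p, max (t - Finv μ s) 0 := by
    simp only [hpoint]
    rw [intervalIntegral.integral_add (hQ.sub intervalIntegrable_const) hint₁,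
      intervalIntegral.integral_sub hQ intervalIntegrable_const, intervalIntegral.integral_const,
      sub_zero, smul_eq_mul, mul_comm p t]
  have hsplit : ∫ x, max (t - x) 0 ∂μ =
      (∫ s in (0 : ℝ)..p, max (t - Finv μ s) 0) + ∫ s in p..1, max (t - Finv μ s) 0 := by
    rw [intervalIntegral.integral_add_adjacent_intervals hint₁ hint₂]
    exact (integral_comp_Finv (g := fun x => max (t - x) 0) (by fun_prop)).symm
  rw [hleft, hsplit]
  ring

lemma mul_Finv_sub_integral_eq (hneg : Integrable (fun x => max (-x) 0) μ)
    (hp : p ∈ Ioo (0 : ℝ) 1) :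
    Finv μ p * p - ∫ x, max (Finv μ p - x) 0 ∂μ = ∫ s in (0 : ℝ)..p, Finv μ s := by
  have hbelow : ∫ s in (0 : ℝ)..p, max (Finv μ s - Finv μ p) 0 = 0 :=
    (intervalIntegral.integral_congr_Ioo_of_le hp.1.le fun s hs => max_eq_right (sub_nonpos.2
      (monotoneOn_Finv_s19 ⟨hs.1, hs.2.trans hp.2⟩ hp hs.2.le))).trans intervalIntegral.integral_zero
  have habove : ∫ s in p..1, max (Finv μ p - Finv μ s) 0 = 0 :=
    (intervalIntegral.integral_congr_Ioo_of_le hp.2.le fun s hs => max_eq_right (sub_nonpos.2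
      (monotoneOn_Finv_s19 hp ⟨hp.1.trans hs.1, hs.2⟩ hs.1.le))).trans intervalIntegral.integral_zero
  have hp' : p ∈ Icc (0 : ℝ) 1 := Ioo_subset_Icc_self hp
  have hQ := intervalIntegrable_Finv hneg hp' fun h => absurd h hp.2.ne
  have hgap := integral_Finv_sub_eq hneg hp' hQ (Finv μ p)
  linarith

lemma isLUB_mul_sub_integral_max (hneg : Integrable (fun x => max (-x) 0) μ)
    (hp : p ∈ Icc (0 : ℝ) 1) (hpos : p = 1 → Integrable (fun x => max x 0) μ) :
    IsLUB (range fun t : ℝ => t * p - ∫ x, max (t - x) 0 ∂μ) (∫ s in (0 : ℝ)..p, Finv μ s) := by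
  have hQ := intervalIntegrable_Finv hneg hp hpos
  have hgap := integral_Finv_sub_eq hneg hp hQ
  refine isLUB_of_mem_closure ?_ ?_
  · rintro _ ⟨t, rfl⟩
    rw [← sub_nonneg, hgap]
    exact add_nonneg (intervalIntegral.integral_nonneg hp.1 fun _ _ => le_max_right _ _)
      (intervalIntegral.integral_nonneg hp.2 fun _ _ => le_max_right _ _)
  rcases hp.1.eq_or_lt with rfl | hp0
  · have htend := (tendsto_integral_max_sub_atTop hneg).neg
    rw [neg_zero] at htend
    rw [intervalIntegral.integral_same]
    refine mem_closure_of_tendsto htend (Eventually.of_forall fun t => ⟨-t, ?_⟩)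
    simp only [mul_zero, zero_sub]
    congr! 4
    ring
  rcases hp.2.eq_or_lt with rfl | hp1
  · have htend := (tendsto_integral_max_sub_atTop (hpos rfl)).const_sub
      (∫ s in (0 : ℝ)..1, Finv μ s)
    rw [sub_zero] at htend
    refine mem_closure_of_tendsto htend (Eventually.of_forall fun t => ⟨t, ?_⟩)
    have hg := hgap t
    rw [intervalIntegral.integral_same, add_zero,
      integral_comp_Finv (g := fun x => max (x - t) 0) (by fun_prop)] at hg
    simp only
    linarith
  · exact subset_closure ⟨Finv μ p, mul_Finv_sub_integral_eq hneg ⟨hp0, hp1⟩⟩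

/-- The constant `∫ max (-x) 0` is `-J(-∞)`: it makes up for normalizing `J` at `0`. -/
theorem integrated_quantile_function_legendre_transform_general
    (hneg : Integrable (fun x => max (-x) 0) μ) (hp : p ∈ Icc (0 : ℝ) 1)
    (hpos : p = 1 → Integrable (fun x => max x 0) μ) :
    IsLUB (range fun t : ℝ => t * p - ∫ u in (0 : ℝ)..t, (μ (Iic u)).toReal)
      ((∫ s in (0 : ℝ)..p, Finv μ s) + ∫ x, max (-x) 0 ∂μ) := by
  have hshift (t : ℝ) : t * p - ∫ u in (0 : ℝ)..t, (μ (Iic u)).toReal =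
      (t * p - ∫ x, max (t - x) 0 ∂μ) + ∫ x, max (-x) 0 ∂μ := by
    have hcdf := integral_cdf_eq_sub hneg t
    simp only [cdf_eq_real, Measure.real] at hcdf
    rw [hcdf]
    ring
  have hlub := (OrderIso.addRight (∫ x, max (-x) 0 ∂μ)).isLUB_image'.2
    (isLUB_mul_sub_integral_max hneg hp hpos)
  rw [← range_comp] at hlub
  simp only [hshift]
  exact hlub

end Quantile

/-- For a finitely supported probability measure with support in `[0,∞)`, the
integrated quantile function is the Legendre transform of the integrated
distribution function `J(t) = ∫_0^t F(u) du`: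
`sup_t (t·p − J(t)) = ∫_0^p F⁻¹(s) ds` for every `p ∈ [0,1]`. -/
theorem integrated_quantile_function_legendre_transform
    (μ : Measure ℝ) [IsProbabilityMeasure μ]
    (hfin : ∃ s : Finset ℝ, μ ((↑s : Set ℝ)ᶜ) = 0)
    (hsupp : μ (Set.Iio 0) = 0) :
    ∀ p ∈ Set.Icc (0:ℝ) 1,
      (⨆ t : ℝ, (t * p - ∫ u in (0:ℝ)..t, (μ (Set.Iic u)).toReal)) =
        ∫ s in (0:ℝ)..p, Finv μ s := by
  intro p hp
  obtain ⟨s, hs⟩ := hfin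
  have hint (f : ℝ → ℝ) : Integrable f μ := integrable_of_measure_compl_finset_eq_zero hs f
  rw [(integrated_quantile_function_legendre_transform_general (hint _) hp
    fun _ => hint _).ciSup_eq, integral_max_neg_eq_zero hsupp, add_zero]
end
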